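/- Let R₁, R₂ : P₂ → ℝ be Lebesgue measurable and essentially bounded, each satisfying the 6-term equation almost everywhere and the symmetry equation almost everywhere, let C₁, C₂ ∈ ℝ, and let L₁, L₂ : (0,1) → ℝ be Lebesgue measurable solutions of the perturbed Spence-Abel system almost everywhere with data (R₁, C₁) and (R₂, C₂) respectively. Then the essential supremum of |L₁ − L₂| over (0,1) is at most (1 + 16/√3)·(the essential supremum of |R₁ − R₂| over P₂) + (1 + 8/√3)·|C₁ − C₂|. -/

import Mathlib

open MeasureTheory Set

/-- The parameter space `P₂ = {(x,y) : 0 < x < y < 1}`. -/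
def P2 : Set (ℝ × ℝ) := {p | 0 < p.1 ∧ p.1 < p.2 ∧ p.2 < 1}

/-- The parameter space `P₃ = {(x,y,z) : 0 < x < y < z < 1}`. -/
def P3 : Set (ℝ × ℝ × ℝ) := {p | 0 < p.1 ∧ p.1 < p.2.1 ∧ p.2.1 < p.2.2 ∧ p.2.2 < 1}

/-- `L` solves the perturbed Spence–Abel system almost everywhere with data `(R, C)`. -/
def SolvesAE (R : ℝ × ℝ → ℝ) (C : ℝ) (L : ℝ → ℝ) : Prop :=
  (∀ᵐ p ∂(volume.restrict P2),
    L p.1 - L p.2 - L (p.1 / p.2) - L ((p.2 - 1) / (p.1 - 1))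
      + L (p.1 * (p.2 - 1) / (p.2 * (p.1 - 1))) = R p) ∧
  (∀ᵐ x ∂(volume.restrict (Set.Ioo (0:ℝ) 1)), L (1 - x) = C - L x)

/-- `R` satisfies the 6-term equation almost everywhere on `P₃`. -/
def SixTermAE (R : ℝ × ℝ → ℝ) : Prop :=
  ∀ᵐ p ∂(volume.restrict P3),
    R (p.1, p.2.1) - R (p.1, p.2.2) + R (p.2.1, p.2.2)
      - R (p.1 / p.2.2, p.2.1 / p.2.2)
      - R ((p.2.2 - 1) / (p.1 - 1), (p.2.2 - 1) / (p.2.1 - 1))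
      + R (p.1 * (p.2.2 - 1) / (p.2.2 * (p.1 - 1)),
           p.2.1 * (p.2.2 - 1) / (p.2.2 * (p.2.1 - 1))) = 0

/-- `R` satisfies the symmetry equation almost everywhere on `P₂`. -/
def SymmAE (R : ℝ × ℝ → ℝ) : Prop :=
  ∀ᵐ p ∂(volume.restrict P2), R (1 - p.2, (1 - p.2) / (1 - p.1)) = R p


namespace SA

abbrev V := ℝ × ℝ

def lin (a b c d : ℝ) (w : V) : V := (a * w.1 + b * w.2, c * w.1 + d * w.2)

def det (x y : V) : ℝ := x.1 * y.2 - x.2 * y.1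

lemma lin_measurable (a b c d : ℝ) : Measurable (lin a b c d) := by
  unfold lin; fun_prop

lemma lin_map (a b c d : ℝ) (h : a * d - b * c ≠ 0) :
    Measure.map (lin a b c d) volume = ENNReal.ofReal |(a * d - b * c)⁻¹| • (volume : Measure V) := by
  have h1 := Measure.map_linearMap_addHaar_eq_smul_addHaar (volume : Measure V)
    (f := Matrix.toLin (Module.Basis.finTwoProd ℝ) (Module.Basis.finTwoProd ℝ) !![a, b; c, d])
    (by rw [LinearMap.det_toLin, Matrix.det_fin_two_of]; exact h)
  rw [LinearMap.det_toLin, Matrix.det_fin_two_of] at h1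
  rw [← h1]
  congr 1
  funext w
  rw [Matrix.toLin_finTwoProd_apply]
  rfl

lemma lin_mp (a b c d : ℝ) (h : |a * d - b * c| = 1) :
    MeasurePreserving (lin a b c d) (volume : Measure V) volume := by
  refine ⟨lin_measurable a b c d, ?_⟩
  rw [lin_map a b c d (by intro h0; rw [h0] at h; simp at h), abs_inv, h]
  simp

lemma lin_qmp (a b c d : ℝ) (h : a * d - b * c ≠ 0) :
    Measure.QuasiMeasurePreserving (lin a b c d) (volume : Measure V) volume := by
  refine ⟨lin_measurable a b c d, ?_⟩
  rw [lin_map a b c d h]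
  exact Measure.smul_absolutelyContinuous

lemma mp_integral {α : Type*} [MeasurableSpace α] {μ : Measure α} {m : α → α}
    (hm : MeasurePreserving m μ μ) {G : α → ℝ} (hG : Measurable G) :
    ∫ p, G (m p) ∂μ = ∫ p, G p ∂μ := by
  conv_rhs => rw [← hm.map_eq]
  rw [integral_map hm.measurable.aemeasurable hG.aestronglyMeasurable]

lemma mp_zero {α : Type*} [MeasurableSpace α] {μ : Measure α} {m : α → α}
    (hm : MeasurePreserving m μ μ) {G : α → ℝ} (hG : Measurable G) (h : ∀ p, G (m p) = - G p) :
    ∫ p, G p ∂μ = 0 := by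
  have := mp_integral hm hG
  simp only [h, integral_neg] at this
  linarith

section gen
variable {α : Type*} [MeasurableSpace α] {μ : Measure α}

def ExpInt (μ : Measure α) (n : α → ℝ) : Prop :=
  Measurable n ∧ (∀ w, 0 ≤ n w) ∧ ∀ ε : ℝ, 0 < ε → Integrable (fun w => Real.exp (-(ε * n w))) μ

lemma poly_exp {ε t : ℝ} (hε : 0 < ε) (ht : 0 ≤ t) :
    (1 + t) ^ 2 * Real.exp (-(ε * t)) ≤ (2 + 16 / ε ^ 2) * Real.exp (-((ε / 2) * t)) := by
  have h1 := Real.quadratic_le_exp_of_nonneg (x := ε / 2 * t) (by positivity)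
  have h2 : Real.exp (-(ε * t)) = Real.exp (-((ε / 2) * t)) * Real.exp (-((ε / 2) * t)) := by
    rw [← Real.exp_add]; ring_nf
  have h3 : (1 + t) ^ 2 ≤ (2 + 16 / ε ^ 2) * Real.exp (ε / 2 * t) := by
    have e1 : (2 + 16 / ε ^ 2) * (1 + ε / 2 * t + (ε / 2 * t) ^ 2 / 2) ≤
      (2 + 16 / ε ^ 2) * Real.exp (ε / 2 * t) := by gcongr
    refine le_trans ?_ e1
    have e2 : (2 + 16 / ε ^ 2) * (1 + ε / 2 * t + (ε / 2 * t) ^ 2 / 2) =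
      2 * (1 + ε / 2 * t + (ε / 2 * t) ^ 2 / 2) + 16 / ε ^ 2 * (1 + ε / 2 * t) + 2 * t ^ 2 := by
      field_simp; ring
    rw [e2]
    have : 0 ≤ 16 / ε ^ 2 * (1 + ε / 2 * t) := by positivity
    have : 0 ≤ ε / 2 * t := by positivity
    nlinarith [sq_nonneg (t - 1), sq_nonneg (ε / 2 * t)]
  rw [h2, ← mul_assoc]
  gcongr
  calc (1 + t) ^ 2 * Real.exp (-(ε / 2 * t))
      ≤ (2 + 16 / ε ^ 2) * Real.exp (ε / 2 * t) * Real.exp (-(ε / 2 * t)) := by gcongr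
    _ = 2 + 16 / ε ^ 2 := by rw [mul_assoc, ← Real.exp_add]; simp

lemma ExpInt.poly {n : α → ℝ} (hn : ExpInt μ n) {ε : ℝ} (hε : 0 < ε) :
    Integrable (fun w => (1 + n w) ^ 2 * Real.exp (-(ε * n w))) μ := by
  have hm := hn.1
  refine Integrable.mono' ((hn.2.2 (ε / 2) (by positivity)).const_mul (2 + 16 / ε ^ 2))
    (by fun_prop) (Filter.Eventually.of_forall fun w => ?_)
  have h0 := hn.2.1 w
  rw [Real.norm_of_nonneg (by positivity)]
  exact poly_exp hε h0

lemma ExpInt.integrable {n : α → ℝ} (hn : ExpInt μ n) {F P : α → ℝ} (hF : Measurable F)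
    (hP : Measurable P) {S A : ℝ} (hS : ∀ w, |F w| ≤ S) (hA : ∀ w, |P w| ≤ A * (1 + n w) ^ 2) :
    Integrable (fun w => F w * P w * Real.exp (-(n w))) μ := by
  have hm := hn.1
  refine Integrable.mono' ((hn.poly one_pos).const_mul (S * A))
    (by fun_prop) (Filter.Eventually.of_forall fun w => ?_)
  rw [one_mul, norm_mul, norm_mul, Real.norm_eq_abs, Real.norm_eq_abs,
    Real.norm_of_nonneg (Real.exp_nonneg _)]
  calc |F w| * |P w| * Real.exp (-(n w)) ≤ S * (A * (1 + n w) ^ 2) * Real.exp (-(n w)) := by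
        have := hS w
        have := hA w
        have : 0 ≤ S := (abs_nonneg _).trans (hS w)
        gcongr
    _ = _ := by ring

lemma ExpInt.hasDerivAt {n : α → ℝ} (hn : ExpInt μ n) {F : α → ℝ} (hF : Measurable F)
    {S A ε δ : ℝ} (hS : ∀ w, |F w| ≤ S) (hε : 0 < ε) (hδ : 0 < δ)
    {P P' Q Q' : ℝ → α → ℝ} (hP : ∀ t, Measurable (P t)) (hQ : ∀ t, Measurable (Q t))
    (hP' : Measurable (P' 0)) (hQ' : Measurable (Q' 0))
    (dP : ∀ t w, HasDerivAt (fun t => P t w) (P' t w) t)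
    (dQ : ∀ t w, HasDerivAt (fun t => Q t w) (Q' t w) t)
    (bP : ∀ t, |t| < δ → ∀ w, |P t w| ≤ A * (1 + n w))
    (bP' : ∀ t, |t| < δ → ∀ w, |P' t w| ≤ A * (1 + n w))
    (bQ' : ∀ t, |t| < δ → ∀ w, |Q' t w| ≤ A * (1 + n w))
    (bQ : ∀ t, |t| < δ → ∀ w, ε * n w ≤ Q t w) :
    HasDerivAt (fun t => ∫ w, F w * P t w * Real.exp (-(Q t w)) ∂μ)
      (∫ w, F w * (P' 0 w - P 0 w * Q' 0 w) * Real.exp (-(Q 0 w)) ∂μ) 0 := by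
  have hm := hn.1
  have h0 : |(0:ℝ)| < δ := by simpa using hδ
  have hAw : ∀ w, 0 ≤ A * (1 + n w) := fun w => (abs_nonneg _).trans (bP 0 h0 w)
  have hS0 : ∀ w : α, 0 ≤ S := fun w => (abs_nonneg _).trans (hS w)
  have hn0 := hn.2.1
  have key := hn.poly hε
  have hPm := hP 0
  have hQm := hQ 0
  have dom : ∀ t, |t| < δ → ∀ w, ∀ R : ℝ, |R| ≤ (A + A ^ 2) * (1 + n w) ^ 2 →
      ‖F w * R * Real.exp (-(Q t w))‖ ≤
        S * (A + A ^ 2) * ((1 + n w) ^ 2 * Real.exp (-(ε * n w))) := by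
    intro t ht w R hR
    rw [norm_mul, norm_mul, Real.norm_eq_abs, Real.norm_eq_abs,
      Real.norm_of_nonneg (Real.exp_nonneg _)]
    have e1 : Real.exp (-(Q t w)) ≤ Real.exp (-(ε * n w)) := by
      have := bQ t ht w
      gcongr
    have := hS w
    have := hS0 w
    have hS2 : 0 ≤ S * ((A + A ^ 2) * (1 + n w) ^ 2) :=
      mul_nonneg this ((abs_nonneg _).trans hR)
    calc |F w| * |R| * Real.exp (-(Q t w)) 
        ≤ S * ((A + A ^ 2) * (1 + n w) ^ 2) * Real.exp (-(ε * n w)) := by gcongr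
      _ = _ := by ring
  have hA0 : ∀ w : α, 0 ≤ A := fun w => by
    have := hAw w
    have h1 : 0 < 1 + n w := by have := hn0 w; linarith
    exact nonneg_of_mul_nonneg_left this h1
  refine (hasDerivAt_integral_of_dominated_loc_of_deriv_le (s := Metric.ball (0:ℝ) δ)
    (F := fun t w => F w * P t w * Real.exp (-(Q t w)))
    (F' := fun t w => F w * (P' t w - P t w * Q' t w) * Real.exp (-(Q t w)))
    (bound := fun w => S * (A + A ^ 2) * ((1 + n w) ^ 2 * Real.exp (-(ε * n w))))
    (Metric.ball_mem_nhds _ hδ) ?_ ?_ ?_ ?_ ?_ ?_).2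
  · refine Filter.Eventually.of_forall fun t => ?_
    have := hP t
    have := hQ t
    fun_prop
  · refine Integrable.mono' (key.const_mul (S * (A + A ^ 2))) (by fun_prop)
      (Filter.Eventually.of_forall fun w => dom 0 h0 w _ ?_)
    refine (bP 0 h0 w).trans ?_
    have := hA0 w
    have := hn0 w
    nlinarith [mul_nonneg (hA0 w) (hn0 w), mul_nonneg (hAw w) (hn0 w), sq_nonneg (A * (1 + n w))]
  · fun_prop
  · refine Filter.Eventually.of_forall fun w t ht => dom t ?_ w _ ?_
    · simpa using ht
    · have ht : |t| < δ := by simpa using ht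
      have b1 := bP t ht w
      have b2 := bP' t ht w
      have b3 := bQ' t ht w
      calc |P' t w - P t w * Q' t w| ≤ |P' t w| + |P t w| * |Q' t w| := by
            rw [← abs_mul]; exact abs_sub _ _
        _ ≤ A * (1 + n w) + (A * (1 + n w)) * (A * (1 + n w)) := by
            have := hAw w
            gcongr
        _ ≤ _ := by
            have := hn0 w
            nlinarith [mul_nonneg (hAw w) (hn0 w)]
  · exact key.const_mul _
  · refine Filter.Eventually.of_forall fun w t ht => ?_
    have := ((dP t w).const_mul (F w)).mul (dQ t w).neg.exp
    refine this.congr_deriv ?_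
    simp only [Pi.neg_apply]
    ring

end gen

end SA

namespace SA

noncomputable def nq (w : V) : ℝ := Real.pi * (w.1 ^ 2 + w.2 ^ 2)
noncomputable def XX (w : V) : ℝ := Real.pi * (w.1 ^ 2 - w.2 ^ 2)
noncomputable def YY (w : V) : ℝ := Real.pi * (2 * w.1 * w.2)

lemma nq_nonneg (w : V) : 0 ≤ nq w := by unfold nq; have := Real.pi_pos; positivity
@[fun_prop] lemma nq_meas : Measurable nq := by unfold nq; fun_prop
@[fun_prop] lemma XX_meas : Measurable XX := by unfold XX; fun_prop
@[fun_prop] lemma YY_meas : Measurable YY := by unfold YY; fun_prop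

lemma XY_sq (w : V) : XX w ^ 2 + YY w ^ 2 = nq w ^ 2 := by unfold XX YY nq; ring
lemma XX_le (w : V) : |XX w| ≤ nq w :=
  abs_le_of_sq_le_sq (by nlinarith [XY_sq w, sq_nonneg (YY w)]) (nq_nonneg w)
lemma YY_le (w : V) : |YY w| ≤ nq w :=
  abs_le_of_sq_le_sq (by nlinarith [XY_sq w, sq_nonneg (XX w)]) (nq_nonneg w)

noncomputable def Th (w v : V) : ℝ := XX w * YY v - YY w * XX v
lemma Th_le (w v : V) : |Th w v| ≤ nq w * nq v := by
  refine abs_le_of_sq_le_sq ?_ (mul_nonneg (nq_nonneg w) (nq_nonneg v))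
  have : (nq w * nq v) ^ 2 = Th w v ^ 2 + (XX w * XX v + YY w * YY v) ^ 2 := by
    rw [mul_pow, ← XY_sq, ← XY_sq]; unfold Th; ring
  nlinarith [sq_nonneg (XX w * XX v + YY w * YY v)]

lemma exp_nq_eq (ε : ℝ) (w : V) : Real.exp (-(ε * nq w)) =
    Real.exp (-(ε * Real.pi) * w.1 ^ 2) * Real.exp (-(ε * Real.pi) * w.2 ^ 2) := by
  rw [← Real.exp_add]; unfold nq; ring_nf

lemma expInt1 : ExpInt (volume : Measure V) nq := by
  refine ⟨nq_meas, nq_nonneg, fun ε hε => ?_⟩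
  simp_rw [exp_nq_eq]
  have h := integrable_exp_neg_mul_sq (b := ε * Real.pi) (mul_pos hε Real.pi_pos)
  exact h.mul_prod h

lemma int_exp (ε : ℝ) (hε : 0 < ε) : ∫ w : V, Real.exp (-(ε * nq w)) = 1 / ε := by
  simp_rw [exp_nq_eq]
  have h := integral_prod_mul (μ := (volume : Measure ℝ)) (ν := (volume : Measure ℝ))
    (fun x => Real.exp (-(ε * Real.pi) * x ^ 2)) (fun x => Real.exp (-(ε * Real.pi) * x ^ 2))
  rw [← Measure.volume_eq_prod] at h
  rw [h, integral_gaussian, Real.mul_self_sqrt]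
  · have := Real.pi_pos
    field_simp
  · have := Real.pi_pos
    positivity

lemma int_e : ∫ w : V, Real.exp (-(nq w)) = 1 := by
  have := int_exp 1 one_pos
  simpa using this

lemma int_nq : ∫ w : V, nq w * Real.exp (-(nq w)) = 1 := by
  have h := expInt1.hasDerivAt (F := fun _ => 1) (by fun_prop) (S := 1) (A := 1) (ε := 1/2)
    (δ := 1/2) (by simp) (by norm_num) (by norm_num)
    (P := fun _ _ => 1) (P' := fun _ _ => 0) (Q := fun t w => (1 + t) * nq w)
    (Q' := fun t w => nq w) (by fun_prop) (by fun_prop) (by fun_prop) (by fun_prop)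
    (fun t w => hasDerivAt_const _ _) (fun t w => by
      have := ((hasDerivAt_id t).const_add 1).mul_const (nq w)
      simpa using this)
    (fun t ht w => by have := nq_nonneg w; simp; linarith)
    (fun t ht w => by have := nq_nonneg w; simp; linarith)
    (fun t ht w => by have := nq_nonneg w; rw [abs_of_nonneg this]; linarith)
    (fun t ht w => by
      have := nq_nonneg w
      have := (abs_lt.1 ht).1
      gcongr; linarith)
  have h2 : HasDerivAt (fun t : ℝ => 1 / (1 + t)) (-1) 0 := by
    have := ((hasDerivAt_id (0:ℝ)).const_add 1).inv (by simp)
    simpa [one_div, Pi.inv_def] using this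
  have h3 := h.unique (h2.congr_of_eventuallyEq (by
    filter_upwards [Metric.ball_mem_nhds (0:ℝ) (by norm_num : (0:ℝ) < 1/2)] with t ht
    have ht : |t| < 1/2 := by simpa using ht
    have := (abs_lt.1 ht).1
    rw [← int_exp (1 + t) (by linarith)]
    simp))
  simp only [add_zero, one_mul, zero_sub, neg_mul, integral_neg] at h3
  linarith

lemma ExpInt.prod {α β : Type*} [MeasureSpace α] [MeasureSpace β]
    [SFinite (volume : Measure α)] [SFinite (volume : Measure β)]
    {n : α → ℝ} {m : β → ℝ} (hn : ExpInt volume n)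
    (hm : ExpInt volume m) : ExpInt (volume : Measure (α × β)) (fun p => n p.1 + m p.2) := by
  have h1 := hn.1
  have h2 := hm.1
  refine ⟨by fun_prop, fun p => add_nonneg (hn.2.1 _) (hm.2.1 _), fun ε hε => ?_⟩
  have := (hn.2.2 ε hε).mul_prod (hm.2.2 ε hε)
  rw [← Measure.volume_eq_prod] at this
  refine this.congr (Filter.Eventually.of_forall fun p => ?_)
  simp only
  rw [← Real.exp_add]; ring_nf

noncomputable def nq2 (p : V × V) : ℝ := nq p.1 + nq p.2
noncomputable def nq3 (p : V × (V × V)) : ℝ := nq p.1 + nq2 p.2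
@[fun_prop] lemma nq2_meas : Measurable nq2 := by unfold nq2; fun_prop
@[fun_prop] lemma nq3_meas : Measurable nq3 := by unfold nq3; fun_prop
lemma expInt2 : ExpInt (volume : Measure (V × V)) nq2 := expInt1.prod expInt1
lemma expInt3 : ExpInt (volume : Measure (V × (V × V))) nq3 := expInt1.prod expInt2

lemma int_split2 (a b : V → ℝ) : ∫ p : V × V, a p.1 * b p.2 * Real.exp (-(nq2 p)) =
    (∫ w, a w * Real.exp (-(nq w))) * ∫ w, b w * Real.exp (-(nq w)) := by
  rw [← integral_prod_mul, ← Measure.volume_eq_prod]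
  congr 1; ext p; unfold nq2; rw [neg_add, Real.exp_add]; ring

lemma int_split3 (a : V → ℝ) (b : V × V → ℝ) :
    ∫ p : V × (V × V), a p.1 * b p.2 * Real.exp (-(nq3 p)) =
    (∫ w, a w * Real.exp (-(nq w))) * ∫ w, b w * Real.exp (-(nq2 w)) := by
  rw [← integral_prod_mul, ← Measure.volume_eq_prod]
  congr 1; ext p; unfold nq3; rw [neg_add, Real.exp_add]; ring

def D (f : V → V → V → V → ℝ) (x y z w v : V) : ℝ :=
  f y z w v - f x z w v + f x y w v - f x y z v + f x y z w

structure Good (f : V → V → V → V → ℝ) (S M : ℝ) : Prop where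
  meas : Measurable fun p : V × V × V × V => f p.1 p.2.1 p.2.2.1 p.2.2.2
  bdd : ∀ x y z w, |f x y z w| ≤ S
  s12 : ∀ x y z w, f y x z w = - f x y z w
  s23 : ∀ x y z w, f x z y w = - f x y z w
  s34 : ∀ x y z w, f x y w z = - f x y z w
  inv : ∀ a b c d, a * d - b * c ≠ 0 → ∀ x y z w,
    f (lin a b c d x) (lin a b c d y) (lin a b c d z) (lin a b c d w) = f x y z w
  hom : ∀ c : ℝ, c ≠ 0 → ∀ x y z w, f (c * x.1, c * x.2) y z w = f x y z w
  H2 : ∀ x y, det x y ≠ 0 → ∀ᵐ p : V × (V × V), |D f x y p.1 p.2.1 p.2.2| ≤ M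
  H3 : ∀ x y z, det x y ≠ 0 → det x z ≠ 0 → det y z ≠ 0 → ∀ᵐ p : V × V, |D f x y z p.1 p.2| ≤ M

variable {f : V → V → V → V → ℝ} {S M : ℝ}

lemma Good.m (hf : Good f S M) {α : Type*} [MeasurableSpace α] {a b c d : α → V}
    (ha : Measurable a) (hb : Measurable b) (hc : Measurable c) (hd : Measurable d) :
    Measurable fun p => f (a p) (b p) (c p) (d p) :=
  hf.meas.comp (ha.prodMk (hb.prodMk (hc.prodMk hd)))

lemma Good.hom2 (hf : Good f S M) (c : ℝ) (hc : c ≠ 0) (x y z w : V) :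
    f x (c * y.1, c * y.2) z w = f x y z w := by
  rw [hf.s12, hf.hom c hc, hf.s12, neg_neg]

lemma Good.hom3 (hf : Good f S M) (c : ℝ) (hc : c ≠ 0) (x y z w : V) :
    f x y (c * z.1, c * z.2) w = f x y z w := by
  rw [hf.s23, hf.hom2 c hc, hf.s23, neg_neg]

/-- master integral bound -/
lemma int_le {α : Type*} [MeasurableSpace α] {μ : Measure α} {n D P P0 : α → ℝ} {M : ℝ}
    (hD : ∀ᵐ p ∂μ, |D p| ≤ M) (hP : ∀ p, |P p| ≤ P0 p)
    (hi : Integrable (fun p => P0 p * Real.exp (-(n p))) μ) :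
    |∫ p, D p * P p * Real.exp (-(n p)) ∂μ| ≤ M * ∫ p, P0 p * Real.exp (-(n p)) ∂μ := by
  rw [← integral_const_mul, ← Real.norm_eq_abs]
  refine norm_integral_le_of_norm_le (hi.const_mul M) ?_
  filter_upwards [hD] with p hp
  rw [norm_mul, norm_mul, Real.norm_eq_abs, Real.norm_eq_abs,
    Real.norm_of_nonneg (Real.exp_nonneg _), ← mul_assoc]
  have := hP p
  have : 0 ≤ M := (abs_nonneg _).trans hp
  gcongr

lemma int5 {α : Type*} [MeasurableSpace α] {μ : Measure α} {a b c d e : α → ℝ}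
    (i1 : Integrable a μ) (i2 : Integrable b μ) (i3 : Integrable c μ) (i4 : Integrable d μ)
    (i5 : Integrable e μ) : ∫ p, (a p - b p + c p - d p + e p) ∂μ =
    ∫ p, a p ∂μ - ∫ p, b p ∂μ + ∫ p, c p ∂μ - ∫ p, d p ∂μ + ∫ p, e p ∂μ := by
  have j2 : Integrable (fun p => a p - b p) μ := i1.sub i2
  have j3 : Integrable (fun p => a p - b p + c p) μ := j2.add i3
  have j4 : Integrable (fun p => a p - b p + c p - d p) μ := j3.sub i4
  rw [integral_add j4 i5, integral_sub j3 i4, integral_add j2 i3, integral_sub i1 i2]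

lemma mp_id : MeasurePreserving (fun w : V => w) volume volume := MeasurePreserving.id _

lemma mp_prod {α β : Type*} [MeasureSpace α] [MeasureSpace β]
    [SFinite (volume : Measure α)] [SFinite (volume : Measure β)] {m : α → α} {k : β → β}
    (hm : MeasurePreserving m volume volume) (hk : MeasurePreserving k volume volume) :
    MeasurePreserving (fun p : α × β => (m p.1, k p.2)) volume volume := by
  have := hm.prod hk
  exact this

lemma mpJ : MeasurePreserving (lin 0 (-1) 1 0) (volume : Measure V) volume :=
  lin_mp _ _ _ _ (by norm_num)
lemma nqJ (w : V) : nq (lin 0 (-1) 1 0 w) = nq w := by simp only [nq, lin]; ring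
lemma XXJ (w : V) : XX (lin 0 (-1) 1 0 w) = - XX w := by simp [XX, lin]; ring
lemma YYJ (w : V) : YY (lin 0 (-1) 1 0 w) = - YY w := by simp [YY, lin]; ring

/-- for `C²+s²=1`, reflection -/
lemma ref_det {C s : ℝ} (h : C ^ 2 + s ^ 2 = 1) : C * (-C) - s * s = -1 := by linarith
lemma ref_mp {C s : ℝ} (h : C ^ 2 + s ^ 2 = 1) :
    MeasurePreserving (lin C s s (-C)) (volume : Measure V) volume :=
  lin_mp _ _ _ _ (by rw [ref_det h]; norm_num)
lemma ref_nq {C s : ℝ} (h : C ^ 2 + s ^ 2 = 1) (w : V) : nq (lin C s s (-C) w) = nq w := by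
  simp only [nq, lin]; linear_combination Real.pi * (w.1 ^ 2 + w.2 ^ 2) * h
lemma ref_Th {C s : ℝ} (h : C ^ 2 + s ^ 2 = 1) (w v : V) :
    Th (lin C s s (-C) w) (lin C s s (-C) v) = - Th w v := by
  have hC : C ^ 2 = 1 - s ^ 2 := by linarith
  have e : Th (lin C s s (-C) w) (lin C s s (-C) v) = - (C ^ 2 + s ^ 2) ^ 2 * Th w v := by
    simp only [Th, XX, YY, lin]; ring
  rw [e, h]; ring

lemma exists_ref (y : V) (hy : y ≠ 0) : ∃ C s : ℝ, C ^ 2 + s ^ 2 = 1 ∧ lin C s s (-C) y = y := by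
  have hp : y.1 ^ 2 + y.2 ^ 2 ≠ 0 := by
    intro h
    have h1 : y.1 = 0 := by nlinarith [sq_nonneg y.1, sq_nonneg y.2]
    have h2 : y.2 = 0 := by nlinarith [sq_nonneg y.1, sq_nonneg y.2]
    exact hy (Prod.ext h1 h2)
  refine ⟨(y.1 ^ 2 - y.2 ^ 2) / (y.1 ^ 2 + y.2 ^ 2), 2 * y.1 * y.2 / (y.1 ^ 2 + y.2 ^ 2), ?_, ?_⟩
  · field_simp; ring
  · ext
    · simp only [lin]; field_simp; ring
    · simp only [lin]; field_simp; ring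

@[fun_prop] lemma Th_meas : Measurable fun p : V × V => Th p.1 p.2 := by unfold Th; fun_prop

lemma van_ref (hf : Good f S M) (y : V) (hy : y ≠ 0) :
    ∫ p : V × (V × V), f y p.1 p.2.1 p.2.2 * Th p.2.1 p.2.2 * Real.exp (-(nq3 p)) = 0 := by
  obtain ⟨C, s, h, hh⟩ := exists_ref y hy
  have hm := hf.m (a := fun p : V × (V × V) => y) (b := fun p => p.1) (c := fun p => p.2.1)
    (d := fun p => p.2.2) (by fun_prop) (by fun_prop) (by fun_prop) (by fun_prop)
  refine mp_zero (mp_prod (ref_mp h) (mp_prod (ref_mp h) (ref_mp h))) ?_ ?_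
  · have : Measurable fun p : V × (V × V) => Th p.2.1 p.2.2 := Th_meas.comp measurable_snd
    fun_prop
  · intro p
    simp only [nq3, nq2, ref_nq h, ref_Th h]
    have := hf.inv C s s (-C) (by rw [ref_det h]; norm_num) y p.1 p.2.1 p.2.2
    rw [hh] at this
    rw [this]; ring

lemma m0 (hf : Good f S M) (x y : V) (hxy : det x y ≠ 0) :
    |∫ p : V × V, f x y p.1 p.2 * Th p.1 p.2 * Real.exp (-(nq2 p))| ≤ M := by
  have hx : x ≠ 0 := by rintro rfl; simp [det] at hxy
  have hy : y ≠ 0 := by rintro rfl; simp [det] at hxy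
  have mT : Measurable fun p : V × (V × V) => Th p.2.1 p.2.2 := Th_meas.comp measurable_snd
  have bT : ∀ p : V × (V × V), |Th p.2.1 p.2.2| ≤ 1 * (1 + nq3 p) ^ 2 := fun p => by
    refine (Th_le _ _).trans ?_
    have h1 := nq_nonneg p.1
    have h2 := nq_nonneg p.2.1
    have h3 := nq_nonneg p.2.2
    simp only [nq3, nq2]
    nlinarith [mul_nonneg h1 h2, mul_nonneg h1 h3, mul_nonneg h2 h3]
  have i (F : V × (V × V) → ℝ) (hF : Measurable F) (hS : ∀ p, |F p| ≤ S) :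
      Integrable (fun p => F p * Th p.2.1 p.2.2 * Real.exp (-(nq3 p))) :=
    expInt3.integrable hF mT hS bT
  have i1 := i (fun p => f y p.1 p.2.1 p.2.2)
    (hf.m (by fun_prop) (by fun_prop) (by fun_prop) (by fun_prop)) (fun p => hf.bdd _ _ _ _)
  have i2 := i (fun p => f x p.1 p.2.1 p.2.2)
    (hf.m (by fun_prop) (by fun_prop) (by fun_prop) (by fun_prop)) (fun p => hf.bdd _ _ _ _)
  have i3 := i (fun p => f x y p.2.1 p.2.2)
    (hf.m (by fun_prop) (by fun_prop) (by fun_prop) (by fun_prop)) (fun p => hf.bdd _ _ _ _)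
  have m4 : Measurable (fun p : V × (V × V) => f x y p.1 p.2.2) :=
    (hf.m (by fun_prop) (by fun_prop) (by fun_prop) (by fun_prop))
  have m5 : Measurable (fun p : V × (V × V) => f x y p.1 p.2.1) :=
    (hf.m (by fun_prop) (by fun_prop) (by fun_prop) (by fun_prop))
  have i4 := i (fun p => f x y p.1 p.2.2) m4 (fun p => hf.bdd _ _ _ _)
  have i5 := i (fun p => f x y p.1 p.2.1) m5 (fun p => hf.bdd _ _ _ _)
  have v4 : ∫ p : V × (V × V), f x y p.1 p.2.2 * Th p.2.1 p.2.2 * Real.exp (-(nq3 p)) = 0 := by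
    refine mp_zero (mp_prod mp_id (mp_prod mpJ mp_id)) ((m4.mul mT).mul (by fun_prop)) fun p => ?_
    simp only [nq3, nq2, nqJ, Th, XXJ, YYJ]; ring
  have v5 : ∫ p : V × (V × V), f x y p.1 p.2.1 * Th p.2.1 p.2.2 * Real.exp (-(nq3 p)) = 0 := by
    refine mp_zero (mp_prod mp_id (mp_prod mp_id mpJ)) ((m5.mul mT).mul (by fun_prop)) fun p => ?_
    simp only [nq3, nq2, nqJ, Th, XXJ, YYJ]; ring
  have v3 : ∫ p : V × (V × V), f x y p.2.1 p.2.2 * Th p.2.1 p.2.2 * Real.exp (-(nq3 p)) =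
      ∫ p : V × V, f x y p.1 p.2 * Th p.1 p.2 * Real.exp (-(nq2 p)) := by
    have := int_split3 (fun _ => 1) (fun p => f x y p.1 p.2 * Th p.1 p.2)
    simp only [one_mul, int_e] at this
    exact this
  have e0 : ∫ p : V × V, nq p.1 * nq p.2 * Real.exp (-(nq2 p)) = 1 := by
    rw [int_split2, int_nq, one_mul]
  have e1 : ∫ p : V × (V × V), nq p.2.1 * nq p.2.2 * Real.exp (-(nq3 p)) = 1 := by
    have := int_split3 (fun _ => 1) (fun p => nq p.1 * nq p.2)
    simp only [one_mul, int_e, e0] at this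
    exact this
  have key := int_le (n := nq3) (hf.H2 x y hxy) (P := fun p => Th p.2.1 p.2.2)
    (P0 := fun p => nq p.2.1 * nq p.2.2) (fun p => Th_le _ _)
    (by
      have := integral_undef.mt (by rw [e1]; exact one_ne_zero)
      exact not_not.1 this)
  rw [e1, mul_one] at key
  have e2 : ∫ p : V × (V × V), D f x y p.1 p.2.1 p.2.2 * Th p.2.1 p.2.2 * Real.exp (-(nq3 p)) =
    ∫ p : V × V, f x y p.1 p.2 * Th p.1 p.2 * Real.exp (-(nq2 p)) := by
    have e3 : ∀ p : V × (V × V), D f x y p.1 p.2.1 p.2.2 * Th p.2.1 p.2.2 * Real.exp (-(nq3 p)) =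
      f y p.1 p.2.1 p.2.2 * Th p.2.1 p.2.2 * Real.exp (-(nq3 p)) -
      f x p.1 p.2.1 p.2.2 * Th p.2.1 p.2.2 * Real.exp (-(nq3 p)) +
      f x y p.2.1 p.2.2 * Th p.2.1 p.2.2 * Real.exp (-(nq3 p)) -
      f x y p.1 p.2.2 * Th p.2.1 p.2.2 * Real.exp (-(nq3 p)) +
      f x y p.1 p.2.1 * Th p.2.1 p.2.2 * Real.exp (-(nq3 p)) := fun p => by unfold D; ring
    simp_rw [e3]
    rw [int5 i1 i2 i3 i4 i5, v3, v4, v5, van_ref hf x hx, van_ref hf y hy]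
    ring
  rwa [e2] at key

end SA

namespace SA

noncomputable def bX (u v : V) : ℝ := Real.pi * (2 * (u.1 * v.1 - u.2 * v.2))
noncomputable def bY (u v : V) : ℝ := Real.pi * (2 * (u.1 * v.2 + u.2 * v.1))
noncomputable def bN (u v : V) : ℝ := Real.pi * (2 * (u.1 * v.1 + u.2 * v.2))

lemma abs_pi_mul_le {a b : ℝ} (h1 : -b ≤ a) (h2 : a ≤ b) : |Real.pi * a| ≤ Real.pi * b := by
  rw [abs_mul, abs_of_pos Real.pi_pos]
  have := Real.pi_pos
  have : |a| ≤ b := abs_le.2 ⟨h1, h2⟩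
  gcongr

lemma bX_le (u v : V) : |bX u v| ≤ nq u + nq v := by
  unfold bX nq; rw [← mul_add]
  exact abs_pi_mul_le (by nlinarith [sq_nonneg (u.1 + v.1), sq_nonneg (u.2 - v.2)])
    (by nlinarith [sq_nonneg (u.1 - v.1), sq_nonneg (u.2 + v.2)])
lemma bN_le (u v : V) : |bN u v| ≤ nq u + nq v := by
  unfold bN nq; rw [← mul_add]
  exact abs_pi_mul_le (by nlinarith [sq_nonneg (u.1 + v.1), sq_nonneg (u.2 + v.2)])
    (by nlinarith [sq_nonneg (u.1 - v.1), sq_nonneg (u.2 - v.2)])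
lemma bY_le (u v : V) : |bY u v| ≤ nq u + nq v := by
  unfold bY nq; rw [← mul_add]
  exact abs_pi_mul_le (by nlinarith [sq_nonneg (u.1 + v.2), sq_nonneg (u.2 + v.1)])
    (by nlinarith [sq_nonneg (u.1 - v.2), sq_nonneg (u.2 - v.1)])

lemma row_le {a b B x y : ℝ} (ha : |a| ≤ B) (hb : |b| ≤ B) :
    (a * x + b * y) ^ 2 ≤ 2 * B ^ 2 * (x ^ 2 + y ^ 2) := by
  have h1 : a ^ 2 ≤ B ^ 2 := by rw [← sq_abs a]; gcongr
  have h2 : b ^ 2 ≤ B ^ 2 := by rw [← sq_abs b]; gcongr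
  nlinarith [sq_nonneg (a * x - b * y), mul_nonneg (sub_nonneg.2 h1) (sq_nonneg x),
    mul_nonneg (sub_nonneg.2 h2) (sq_nonneg y), mul_nonneg (sq_nonneg B) (sq_nonneg y),
    mul_nonneg (sq_nonneg B) (sq_nonneg x)]

lemma lin_nq_le {a b c d B : ℝ} (ha : |a| ≤ B) (hb : |b| ≤ B) (hc : |c| ≤ B) (hd : |d| ≤ B) (w : V) :
    nq (lin a b c d w) ≤ 4 * B ^ 2 * nq w := by
  have h1 := row_le (x := w.1) (y := w.2) ha hb
  have h2 := row_le (x := w.1) (y := w.2) hc hd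
  simp only [nq, lin]
  have := mul_le_mul_of_nonneg_left (add_le_add h1 h2) Real.pi_pos.le
  linarith

lemma nq_le_lin {a b c d B : ℝ} (ha : |a| ≤ B) (hb : |b| ≤ B) (hc : |c| ≤ B) (hd : |d| ≤ B)
    (hdet : a * d - b * c = 1) (w : V) :
    nq w ≤ 4 * B ^ 2 * nq (lin a b c d w) := by
  have h := lin_nq_le (a := d) (b := -b) (c := -c) (d := a) hd (by simpa using hb) (by simpa using hc)
    ha (lin a b c d w)
  have e : lin d (-b) (-c) a (lin a b c d w) = w := by
    ext
    · simp only [lin]; linear_combination w.1 * hdet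
    · simp only [lin]; linear_combination w.2 * hdet
  rwa [e] at h

lemma quad_deriv {F : V × V → ℝ} {S : ℝ} (hF : Measurable F) (hS : ∀ p, |F p| ≤ S)
    {a b c d a' b' c' d' : ℝ → ℝ} {B : ℝ} (z0 zx zy : ℝ)
    (ha : ∀ t, HasDerivAt a (a' t) t) (hb : ∀ t, HasDerivAt b (b' t) t)
    (hc : ∀ t, HasDerivAt c (c' t) t) (hd : ∀ t, HasDerivAt d (d' t) t)
    (hdet : ∀ t, a t * d t - b t * c t = 1)
    (hB : ∀ t, |t| < 1 → |a t| ≤ B ∧ |b t| ≤ B ∧ |c t| ≤ B ∧ |d t| ≤ B)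
    (hB' : ∀ t, |t| < 1 → |a' t| ≤ B ∧ |b' t| ≤ B ∧ |c' t| ≤ B ∧ |d' t| ≤ B) :
    let m := fun t => lin (a t) (b t) (c t) (d t)
    let m' := fun t => lin (a' t) (b' t) (c' t) (d' t)
    HasDerivAt (fun t => ∫ p : V × V, F p * (z0 + zx * XX (m t p.1) + zy * YY (m t p.1)) *
        Real.exp (-(nq (m t p.1) + nq (m t p.2))))
      (∫ p : V × V, F p * ((zx * bX (m 0 p.1) (m' 0 p.1) + zy * bY (m 0 p.1) (m' 0 p.1)) -
        (z0 + zx * XX (m 0 p.1) + zy * YY (m 0 p.1)) * 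
          (bN (m 0 p.1) (m' 0 p.1) + bN (m 0 p.2) (m' 0 p.2))) *
        Real.exp (-(nq (m 0 p.1) + nq (m 0 p.2)))) 0 := by
  intro m m'
  have hm : ∀ t, Measurable (m t) := fun t => lin_measurable _ _ _ _
  have hm' : ∀ t, Measurable (m' t) := fun t => lin_measurable _ _ _ _
  have hBpos : 0 < B := by
    have h0 := hB 0 (by simp)
    have h1 : 0 ≤ B := (abs_nonneg _).trans h0.1
    rcases h1.lt_or_eq with h | h
    · exact h
    · exfalso
      rw [← h] at h0
      have h2 := hdet 0
      rw [abs_nonpos_iff.1 h0.1, abs_nonpos_iff.1 h0.2.1] at h2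
      norm_num at h2
  have d1 : ∀ (w : V) t, HasDerivAt (fun t => (m t w).1) (m' t w).1 t := fun w t =>
    ((ha t).mul_const w.1).add ((hb t).mul_const w.2)
  have d2 : ∀ (w : V) t, HasDerivAt (fun t => (m t w).2) (m' t w).2 t := fun w t =>
    ((hc t).mul_const w.1).add ((hd t).mul_const w.2)
  have dX : ∀ (w : V) t, HasDerivAt (fun t => XX (m t w)) (bX (m t w) (m' t w)) t := fun w t => by
    refine ((((d1 w t).pow 2).sub ((d2 w t).pow 2)).const_mul Real.pi).congr_deriv ?_
    simp only [bX, Nat.cast_ofNat]; ring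
  have dN : ∀ (w : V) t, HasDerivAt (fun t => nq (m t w)) (bN (m t w) (m' t w)) t := fun w t => by
    refine ((((d1 w t).pow 2).add ((d2 w t).pow 2)).const_mul Real.pi).congr_deriv ?_
    simp only [bN, Nat.cast_ofNat]; ring
  have dY : ∀ (w : V) t, HasDerivAt (fun t => YY (m t w)) (bY (m t w) (m' t w)) t := fun w t => by
    refine ((((d1 w t).const_mul 2).mul (d2 w t)).const_mul Real.pi).congr_deriv ?_
    simp only [bY]; ring
  have n1 : ∀ t, |t| < 1 → ∀ w, nq (m t w) ≤ 4 * B ^ 2 * nq w := fun t ht w => by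
    obtain ⟨h1, h2, h3, h4⟩ := hB t ht
    exact lin_nq_le h1 h2 h3 h4 w
  have n2 : ∀ t, |t| < 1 → ∀ w, nq (m' t w) ≤ 4 * B ^ 2 * nq w := fun t ht w => by
    obtain ⟨h1, h2, h3, h4⟩ := hB' t ht
    exact lin_nq_le h1 h2 h3 h4 w
  have n3 : ∀ t, |t| < 1 → ∀ w, nq w ≤ 4 * B ^ 2 * nq (m t w) := fun t ht w => by
    obtain ⟨h1, h2, h3, h4⟩ := hB t ht
    exact nq_le_lin h1 h2 h3 h4 (hdet t) w
  set Z := |z0| + |zx| + |zy| with hZ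
  have hb0 : 0 ≤ B ^ 2 := sq_nonneg B
  have fin : ∀ (p : V × V) (r : ℝ), r ≤ Z * (1 + 8 * B ^ 2 * nq p.1) + 8 * B ^ 2 * nq2 p → 
      r ≤ (Z + 1) * (1 + 8 * B ^ 2) * (1 + nq2 p) := by
    intro p r hr
    refine hr.trans ?_
    have h1 := nq_nonneg p.1
    have h2 := nq_nonneg p.2
    have hZ0 : 0 ≤ Z := by positivity
    unfold nq2
    have := mul_nonneg hZ0 hb0
    nlinarith [mul_nonneg hZ0 h1, mul_nonneg hZ0 h2, mul_nonneg hb0 h1, mul_nonneg hb0 h2,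
      mul_nonneg this h1, mul_nonneg this h2]
  refine expInt2.hasDerivAt (F := F) hF (S := S) (A := (Z + 1) * (1 + 8 * B ^ 2))
    (ε := 1 / (4 * B ^ 2)) (δ := 1) hS (by positivity) one_pos
    (P := fun t p => z0 + zx * XX (m t p.1) + zy * YY (m t p.1))
    (P' := fun t p => zx * bX (m t p.1) (m' t p.1) + zy * bY (m t p.1) (m' t p.1))
    (Q := fun t p => nq (m t p.1) + nq (m t p.2))
    (Q' := fun t p => bN (m t p.1) (m' t p.1) + bN (m t p.2) (m' t p.2))
    ?_ ?_ ?_ ?_ ?_ ?_ ?_ ?_ ?_ ?_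
  · intro t; have := hm t; fun_prop
  · intro t; have := hm t; fun_prop
  · have := hm 0; have := hm' 0; unfold bX bY; fun_prop
  · have := hm 0; have := hm' 0; unfold bN; fun_prop
  · intro t p
    refine (((dX p.1 t).const_mul zx).const_add z0).add ((dY p.1 t).const_mul zy)
  · intro t p
    exact (dN _ t).add (dN _ t)
  · intro t ht p
    refine fin p _ ?_
    have e1 := XX_le (m t p.1)
    have e2 := YY_le (m t p.1)
    have e3 := n1 t ht p.1
    have h1 := nq_nonneg p.1
    have h2 := nq_nonneg p.2
    calc |z0 + zx * XX (m t p.1) + zy * YY (m t p.1)| 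
        ≤ |z0| + |zx| * |XX (m t p.1)| + |zy| * |YY (m t p.1)| := by
          rw [← abs_mul, ← abs_mul]; exact abs_add_three _ _ _
      _ ≤ |z0| + |zx| * (4 * B ^ 2 * nq p.1) + |zy| * (4 * B ^ 2 * nq p.1) := by
          have := e1.trans e3
          have := e2.trans e3
          gcongr
      _ ≤ _ := by
          unfold nq2
          have := mul_nonneg hb0 h1
          have := mul_nonneg hb0 h2
          nlinarith [mul_nonneg (abs_nonneg z0) this, mul_nonneg (abs_nonneg zx) this, abs_nonneg zx, abs_nonneg zy,
            mul_nonneg (abs_nonneg zx) (mul_nonneg hb0 h1), mul_nonneg (abs_nonneg zy) (mul_nonneg hb0 h1), mul_nonneg (abs_nonneg z0) (mul_nonneg hb0 h1)]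
  · intro t ht p
    refine fin p _ ?_
    have e1 := bX_le (m t p.1) (m' t p.1)
    have e2 := bY_le (m t p.1) (m' t p.1)
    have e3 := n1 t ht p.1
    have e4 := n2 t ht p.1
    have h1 := nq_nonneg p.1
    have h2 := nq_nonneg p.2
    calc |zx * bX (m t p.1) (m' t p.1) + zy * bY (m t p.1) (m' t p.1)| 
        ≤ |zx| * |bX (m t p.1) (m' t p.1)| + |zy| * |bY (m t p.1) (m' t p.1)| := by
          rw [← abs_mul, ← abs_mul]; exact abs_add_le _ _
      _ ≤ |zx| * (8 * B ^ 2 * nq p.1) + |zy| * (8 * B ^ 2 * nq p.1) := by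
          gcongr <;> linarith
      _ ≤ _ := by
          unfold nq2
          have := mul_nonneg hb0 h1
          have := mul_nonneg hb0 h2
          nlinarith [mul_nonneg (abs_nonneg z0) this, mul_nonneg (abs_nonneg zx) this, abs_nonneg zx, abs_nonneg zy, abs_nonneg z0,
            mul_nonneg (abs_nonneg zx) (mul_nonneg hb0 h1), mul_nonneg (abs_nonneg zy) (mul_nonneg hb0 h1), mul_nonneg (abs_nonneg z0) (mul_nonneg hb0 h1)]
  · intro t ht p
    refine fin p _ ?_
    have e1 := bN_le (m t p.1) (m' t p.1)
    have e2 := bN_le (m t p.2) (m' t p.2)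
    have e3 := n1 t ht p.1
    have e4 := n2 t ht p.1
    have e5 := n1 t ht p.2
    have e6 := n2 t ht p.2
    have h1 := nq_nonneg p.1
    refine (abs_add_le _ _).trans ?_
    have : 0 ≤ Z * (1 + 8 * B ^ 2 * nq p.1) := by positivity
    unfold nq2
    linarith
  · intro t ht p
    have e3 := n3 t ht p.1
    have e5 := n3 t ht p.2
    rw [one_div, inv_mul_le_iff₀ (by positivity)]
    unfold nq2
    linarith

end SA

namespace SA

variable {f : V → V → V → V → ℝ} {S M : ℝ}

noncomputable def Kf (f : V → V → V → V → ℝ) (x y : V) : ℝ :=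
  ∫ p : V × V, f x y p.1 p.2 * XX p.1 * Real.exp (-(nq2 p))
noncomputable def Nf (f : V → V → V → V → ℝ) (x y : V) : ℝ :=
  ∫ p : V × V, f x y p.1 p.2 * YY p.1 * Real.exp (-(nq2 p))

noncomputable def pp (τ : ℝ) : V := (Real.exp τ, Real.exp (-τ))
noncomputable def pm (τ : ℝ) : V := (Real.exp τ, -Real.exp (-τ))

lemma pp_det (τ : ℝ) : det (pp τ) (pm τ) ≠ 0 := by
  simp only [det, pp, pm, mul_neg, ← Real.exp_add]
  norm_num

lemma as_det (s : ℝ) : Real.exp s * Real.exp (-s) - 0 * 0 = 1 := by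
  rw [← Real.exp_add]; simp

lemma Good.m2 (hf : Good f S M) (x y : V) : Measurable fun p : V × V => f x y p.1 p.2 :=
  hf.m (by fun_prop) (by fun_prop) (by fun_prop) (by fun_prop)

lemma N_shift (hf : Good f S M) (τ s : ℝ) : Nf f (pp (τ + s)) (pm (τ + s)) =
    ∫ p : V × V, f (pp τ) (pm τ) p.1 p.2 *
      (0 + 0 * XX (lin (Real.exp s) 0 0 (Real.exp (-s)) p.1)
        + 1 * YY (lin (Real.exp s) 0 0 (Real.exp (-s)) p.1)) *
      Real.exp (-(nq (lin (Real.exp s) 0 0 (Real.exp (-s)) p.1)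
        + nq (lin (Real.exp s) 0 0 (Real.exp (-s)) p.2))) := by
  have hm := lin_mp (Real.exp s) 0 0 (Real.exp (-s)) (by rw [as_det]; simp)
  have h2 := hf.m2 (pp (τ + s)) (pm (τ + s))
  have := mp_integral (mp_prod hm hm)
    (G := fun p : V × V => f (pp (τ + s)) (pm (τ + s)) p.1 p.2 * YY p.1 * Real.exp (-(nq2 p)))
    (by fun_prop)
  rw [Nf, ← this]
  congr 1; ext p
  have e1 : pp (τ + s) = lin (Real.exp s) 0 0 (Real.exp (-s)) (pp τ) := by
    simp only [pp, lin, neg_add, Real.exp_add]; ext <;> simp <;> ring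
  have e2 : pm (τ + s) = lin (Real.exp s) 0 0 (Real.exp (-s)) (pm τ) := by
    simp only [pm, lin, neg_add, Real.exp_add]; ext <;> simp <;> ring
  simp only [e1, e2]
  rw [hf.inv _ _ _ _ (by rw [as_det]; norm_num)]
  simp only [nq2]; ring

lemma N_deriv (hf : Good f S M) (τ : ℝ) : HasDerivAt (fun t => Nf f (pp t) (pm t))
    (∫ p : V × V, f (pp τ) (pm τ) p.1 p.2 * (-(YY p.1 * (2 * XX p.1 + 2 * XX p.2))) *
      Real.exp (-(nq2 p))) τ := by
  have h := quad_deriv (F := fun p => f (pp τ) (pm τ) p.1 p.2) (hf.m2 _ _)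
    (fun p => hf.bdd _ _ _ _)
    (a := fun s => Real.exp s) (b := fun _ => 0) (c := fun _ => 0) (d := fun s => Real.exp (-s))
    (a' := fun s => Real.exp s) (b' := fun _ => 0) (c' := fun _ => 0)
    (d' := fun s => -Real.exp (-s)) (B := Real.exp 1) 0 0 1
    (fun t => Real.hasDerivAt_exp t) (fun t => hasDerivAt_const _ _) (fun t => hasDerivAt_const _ _)
    (fun t => by simpa using (hasDerivAt_neg t).exp) as_det
    (fun t ht => by
      have := abs_lt.1 ht
      simp only [Real.abs_exp, abs_zero, Real.exp_le_exp]
      refine ⟨by linarith, by positivity, by positivity, by linarith⟩)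
    (fun t ht => by
      have := abs_lt.1 ht
      simp only [abs_neg, Real.abs_exp, abs_zero, Real.exp_le_exp]
      refine ⟨by linarith, by positivity, by positivity, by linarith⟩)
  simp only at h
  simp_rw [← N_shift hf τ] at h
  have h3 := HasDerivAt.comp_sub_const τ τ (f := fun s => Nf f (pp (τ + s)) (pm (τ + s))) 
    (by rw [sub_self]; exact h)
  simp only [add_sub_cancel] at h3
  refine h3.congr_deriv ?_
  congr 1; ext p
  have e1 : ∀ w : V, lin (Real.exp 0) 0 0 (Real.exp (-0)) w = w := fun w => by simp [lin]
  have e2 : ∀ w : V, lin (Real.exp 0) 0 0 (-Real.exp (-0)) w = (w.1, -w.2) := fun w => by simp [lin]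
  simp only [e1, e2, bN, bY, bX, nq2, YY, XX]
  ring

lemma stab (hf : Good f S M) (τ : ℝ) : 
    ∫ p : V × V, f (pp τ) (pm τ) p.1 p.2 * (2 * Real.sinh (2 * τ) * YY p.1 - 
      XX p.1 * (2 * Real.cosh (2 * τ) * (YY p.1 + YY p.2))) *
      Real.exp (-(nq2 p)) = 0 := by
  have hμ := Real.exp_pos (2 * τ)
  have hdet : ∀ s, Real.cosh s * Real.cosh s - Real.exp (2 * τ) * Real.sinh s *
      (Real.sinh s * Real.exp (-(2 * τ))) = 1 := fun s => by
    rw [Real.exp_neg]; field_simp; linarith [Real.cosh_sq s]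
  have hE1 : ∀ t : ℝ, |t| < 1 → |Real.cosh t| ≤ Real.exp 1 ∧ |Real.sinh t| ≤ Real.exp 1 := by
    intro t ht
    have h1 := abs_lt.1 ht
    have h2 : Real.exp t ≤ Real.exp 1 := Real.exp_le_exp.2 (by linarith)
    have h3 : Real.exp (-t) ≤ Real.exp 1 := Real.exp_le_exp.2 (by linarith)
    have h4 := Real.exp_pos t
    have h5 := Real.exp_pos (-t)
    rw [Real.cosh_eq, Real.sinh_eq, abs_le, abs_le]
    refine ⟨⟨by linarith, by linarith⟩, by linarith, by linarith⟩
  set B := Real.exp 1 * (1 + Real.exp (2 * τ) + Real.exp (-(2 * τ))) with hBd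
  have hν := Real.exp_pos (-(2 * τ))
  have hB0 : Real.exp 1 ≤ B := le_mul_of_one_le_right (Real.exp_pos _).le (by linarith)
  have hB1 : ∀ r : ℝ, |r| ≤ Real.exp 1 → |Real.exp (2 * τ) * r| ≤ B := fun r hr => by
    rw [abs_mul, Real.abs_exp, hBd, mul_comm]
    gcongr
    linarith
  have hB2 : ∀ r : ℝ, |r| ≤ Real.exp 1 → |r * Real.exp (-(2 * τ))| ≤ B := fun r hr => by
    rw [abs_mul, Real.abs_exp, hBd]
    gcongr
    linarith
  have h := quad_deriv (F := fun p => f (pp τ) (pm τ) p.1 p.2) (hf.m2 _ _)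
    (fun p => hf.bdd _ _ _ _)
    (a := fun s => Real.cosh s) (b := fun s => Real.exp (2 * τ) * Real.sinh s)
    (c := fun s => Real.sinh s * Real.exp (-(2 * τ)))
    (d := fun s => Real.cosh s)
    (a' := fun s => Real.sinh s) (b' := fun s => Real.exp (2 * τ) * Real.cosh s)
    (c' := fun s => Real.cosh s * Real.exp (-(2 * τ)))
    (d' := fun s => Real.sinh s) (B := B) 0 1 0
    (fun t => Real.hasDerivAt_cosh t) (fun t => (Real.hasDerivAt_sinh t).const_mul _)
    (fun t => (Real.hasDerivAt_sinh t).mul_const _)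
    (fun t => Real.hasDerivAt_cosh t) hdet
    (fun t ht => ⟨(hE1 t ht).1.trans hB0, hB1 _ (hE1 t ht).2, hB2 _ (hE1 t ht).2,
      (hE1 t ht).1.trans hB0⟩)
    (fun t ht => ⟨(hE1 t ht).2.trans hB0, hB1 _ (hE1 t ht).1, hB2 _ (hE1 t ht).1,
      (hE1 t ht).2.trans hB0⟩)
  simp only at h
  have hconst : ∀ t, ∫ p : V × V, f (pp τ) (pm τ) p.1 p.2 * (0 + 1 * 
      XX (lin (Real.cosh t) (Real.exp (2 * τ) * Real.sinh t) (Real.sinh t * Real.exp (-(2 * τ)))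
        (Real.cosh t) p.1) + 0 * 
      YY (lin (Real.cosh t) (Real.exp (2 * τ) * Real.sinh t) (Real.sinh t * Real.exp (-(2 * τ)))
        (Real.cosh t) p.1)) * Real.exp (-(nq (lin (Real.cosh t) (Real.exp (2 * τ) * Real.sinh t)
        (Real.sinh t * Real.exp (-(2 * τ))) (Real.cosh t) p.1) + 
        nq (lin (Real.cosh t) (Real.exp (2 * τ) * Real.sinh t)
        (Real.sinh t * Real.exp (-(2 * τ))) (Real.cosh t) p.2))) = Kf f (pp τ) (pm τ) := by
    intro t
    have hm := lin_mp (Real.cosh t) (Real.exp (2 * τ) * Real.sinh t)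
      (Real.sinh t * Real.exp (-(2 * τ))) (Real.cosh t) (by rw [hdet]; simp)
    have h2 := hf.m2 (pp τ) (pm τ)
    have := mp_integral (mp_prod hm hm)
      (G := fun p : V × V => f (pp τ) (pm τ) p.1 p.2 * XX p.1 * Real.exp (-(nq2 p)))
      (by fun_prop)
    rw [Kf, ← this]
    congr 1; ext p
    have e0 : Real.exp (2 * τ) = Real.exp τ * Real.exp τ := by rw [← Real.exp_add]; ring_nf
    have e0' : Real.exp (-(2 * τ)) = Real.exp (-τ) * Real.exp (-τ) := by
      rw [← Real.exp_add]; ring_nf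
    have e00 : Real.exp τ * Real.exp (-τ) = 1 := by rw [← Real.exp_add]; simp
    have e1 : lin (Real.cosh t) (Real.exp (2 * τ) * Real.sinh t)
      (Real.sinh t * Real.exp (-(2 * τ))) (Real.cosh t) (pp τ) =
      (Real.exp t * (pp τ).1, Real.exp t * (pp τ).2) := by
      simp only [pp, lin, e0, e0', ← Real.cosh_add_sinh t]
      ext <;> simp only
      · linear_combination Real.sinh t * Real.exp τ * e00
      · linear_combination Real.sinh t * Real.exp (-τ) * e00
    have e2 : lin (Real.cosh t) (Real.exp (2 * τ) * Real.sinh t)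
      (Real.sinh t * Real.exp (-(2 * τ))) (Real.cosh t) (pm τ) =
      (Real.exp (-t) * (pm τ).1, Real.exp (-t) * (pm τ).2) := by
      simp only [pm, lin, e0, e0', ← Real.cosh_sub_sinh t]
      ext <;> simp only
      · linear_combination -Real.sinh t * Real.exp τ * e00
      · linear_combination Real.sinh t * Real.exp (-τ) * e00
    have e3 := hf.inv (Real.cosh t) (Real.exp (2 * τ) * Real.sinh t)
      (Real.sinh t * Real.exp (-(2 * τ))) (Real.cosh t) (by rw [hdet]; norm_num) (pp τ) (pm τ) p.1 p.2
    rw [e1, e2, hf.hom _ (Real.exp_ne_zero _), hf.hom2 _ (Real.exp_ne_zero _)] at e3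
    simp only [e3, nq2]; ring
  simp_rw [hconst] at h
  have h0 := h.unique (hasDerivAt_const _ _)
  rw [← h0]
  congr 1; ext p
  have e1 : ∀ w : V, lin (Real.cosh 0) (Real.exp (2 * τ) * Real.sinh 0)
      (Real.sinh 0 * Real.exp (-(2 * τ))) (Real.cosh 0) w = w := fun w => by simp [lin]
  simp only [e1]
  simp only [lin, bN, bY, bX, nq2, YY, XX, Real.sinh_zero, Real.cosh_zero, Real.sinh_eq (2 * τ),
    Real.cosh_eq (2 * τ)]
  ring

lemma J_bound (hf : Good f S M) (τ : ℝ) :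
    |Real.cosh (2 * τ) * Nf f (pp τ) (pm τ) - Nf f (pp 0) (pm 0)| ≤ M * |Real.sinh (2 * τ)| := by
  have hd : ∀ τ, ∃ j, |j| ≤ M ∧ HasDerivAt (fun t => Real.cosh (2 * t) * Nf f (pp t) (pm t))
      (2 * Real.cosh (2 * τ) * j) τ := by
    intro τ
    refine ⟨_, m0 hf (pp τ) (pm τ) (pp_det τ), ?_⟩
    have hc : HasDerivAt (fun t : ℝ => Real.cosh (2 * t)) (2 * Real.sinh (2 * τ)) τ := by
      have := ((hasDerivAt_id τ).const_mul 2).cosh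
      simp only [id] at this
      exact this.congr_deriv (by ring)
    refine (hc.mul (N_deriv hf τ)).congr_deriv ?_
    have hst := stab hf τ
    have mm := hf.m2 (pp τ) (pm τ)
    have b1 : ∀ p : V × V, |YY p.1| ≤ 1 * (1 + nq2 p) ^ 2 := fun p => by
      refine (YY_le _).trans ?_
      have h1 := nq_nonneg p.1
      have h2 := nq_nonneg p.2
      simp only [nq2]
      nlinarith [mul_nonneg h1 h2]
    have b2 : ∀ p : V × V, |YY p.1 * (2 * XX p.1 + 2 * XX p.2)| ≤ 2 * (1 + nq2 p) ^ 2 := fun p => by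
      have h1 := nq_nonneg p.1
      have h2 := nq_nonneg p.2
      have a1 := YY_le p.1
      have a2 := XX_le p.1
      have a3 := XX_le p.2
      rw [abs_mul]
      calc |YY p.1| * |2 * XX p.1 + 2 * XX p.2| ≤ nq p.1 * (2 * nq p.1 + 2 * nq p.2) := by
            gcongr
            refine (abs_add_le _ _).trans ?_
            rw [abs_mul, abs_mul, abs_two]; gcongr
        _ ≤ _ := by simp only [nq2]; nlinarith [mul_nonneg h1 h2]
    have b3 : ∀ p : V × V, |XX p.1 * (YY p.1 + YY p.2)| ≤ 1 * (1 + nq2 p) ^ 2 := fun p => by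
      have h1 := nq_nonneg p.1
      have h2 := nq_nonneg p.2
      have a1 := XX_le p.1
      have a2 := YY_le p.1
      have a3 := YY_le p.2
      rw [abs_mul]
      calc |XX p.1| * |YY p.1 + YY p.2| ≤ nq p.1 * (nq p.1 + nq p.2) := by
            gcongr
            refine (abs_add_le _ _).trans ?_
            gcongr
        _ ≤ _ := by simp only [nq2]; nlinarith [mul_nonneg h1 h2]
    have i1 := expInt2.integrable mm (P := fun p => YY p.1) (by fun_prop)
      (fun p => hf.bdd _ _ _ _) b1
    have i2 := expInt2.integrable mm (P := fun p => YY p.1 * (2 * XX p.1 + 2 * XX p.2)) (by fun_prop)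
      (fun p => hf.bdd _ _ _ _) b2
    have i3 := expInt2.integrable mm (P := fun p => XX p.1 * (YY p.1 + YY p.2)) (by fun_prop)
      (fun p => hf.bdd _ _ _ _) b3
    have hst2 : 2 * Real.sinh (2 * τ) * Nf f (pp τ) (pm τ) = 2 * Real.cosh (2 * τ) *
        ∫ p : V × V, f (pp τ) (pm τ) p.1 p.2 * (XX p.1 * (YY p.1 + YY p.2)) *
          Real.exp (-(nq2 p)) := by
      rw [← sub_eq_zero, ← hst, Nf, ← integral_const_mul, ← integral_const_mul, ← integral_sub]
      · congr 1; ext p; ring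
      · exact i1.const_mul _
      · exact i3.const_mul _
    rw [hst2, ← integral_const_mul, ← integral_const_mul, ← integral_const_mul, ← integral_add]
    · congr 1; ext p; unfold Th; ring
    · exact i3.const_mul _
    · refine Integrable.const_mul (i2.neg.congr (Filter.Eventually.of_forall fun p => ?_)) _
      simp only [Pi.neg_apply]; ring
  have hs : ∀ τ : ℝ, HasDerivAt (fun t : ℝ => M * Real.sinh (2 * t)) (2 * Real.cosh (2 * τ) * M) τ := by
    intro τ
    have := (((hasDerivAt_id τ).const_mul 2).sinh).const_mul M
    simp only [id] at this
    exact this.congr_deriv (by ring)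
  have mono : Monotone (fun t => Real.cosh (2 * t) * Nf f (pp t) (pm t) + M * Real.sinh (2 * t)) := by
    refine monotone_of_hasDerivAt_nonneg (f' := fun t => 2 * Real.cosh (2 * t) * (Classical.choose (hd t)) + 2 * Real.cosh (2 * t) * M)
      (fun t => (Classical.choose_spec (hd t)).2.add (hs t)) (fun t => ?_)
    have := (abs_le.1 (Classical.choose_spec (hd t)).1).1
    have hc := Real.cosh_pos (2 * t)
    simp only [Pi.zero_apply]
    nlinarith
  have anti : Antitone (fun t => Real.cosh (2 * t) * Nf f (pp t) (pm t) - M * Real.sinh (2 * t)) := by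
    refine antitone_of_hasDerivAt_nonpos (f' := fun t => 2 * Real.cosh (2 * t) * (Classical.choose (hd t)) - 2 * Real.cosh (2 * t) * M)
      (fun t => (Classical.choose_spec (hd t)).2.sub (hs t)) (fun t => ?_)
    have := (abs_le.1 (Classical.choose_spec (hd t)).1).2
    have hc := Real.cosh_pos (2 * t)
    simp only [Pi.zero_apply]
    nlinarith
  rcases le_total 0 τ with h | h
  · have h1 := mono h
    have h2 := anti h
    simp at h1 h2
    rw [abs_of_nonneg (Real.sinh_nonneg_iff.2 (by linarith)), abs_le]
    constructor <;> linarith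
  · have h1 := mono h
    have h2 := anti h
    simp at h1 h2
    rw [abs_of_nonpos (Real.sinh_nonpos_iff.2 (by linarith)), abs_le]
    constructor <;> linarith

end SA

namespace SA

variable {f : V → V → V → V → ℝ} {S M : ℝ}

noncomputable def Xh (x : V) : ℝ := XX x / nq x

lemma Kf_swap (hf : Good f S M) (x y : V) : Kf f y x = - Kf f x y := by
  unfold Kf
  rw [← integral_neg]
  congr 1; ext p
  rw [hf.s12]; ring

lemma K_zero (hf : Good f S M) (τ : ℝ) : Kf f (pp τ) (pm τ) = 0 := by
  have hm := lin_mp 1 0 0 (-1) (by norm_num)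
  have mm := hf.m2 (pp τ) (pm τ)
  refine mp_zero (mp_prod hm hm) (by fun_prop) fun p => ?_
  have e1 : pp τ = lin 1 0 0 (-1) (pm τ) := by simp [pp, pm, lin]
  have e2 : pm τ = lin 1 0 0 (-1) (pp τ) := by simp [pp, pm, lin]
  have e3 := hf.inv 1 0 0 (-1) (by norm_num) (pm τ) (pp τ) p.1 p.2
  rw [← e1, ← e2] at e3
  simp only [e3]
  rw [hf.s12]
  simp only [lin, XX, nq2, nq]; ring_nf

lemma K_core (hf : Good f S M) (τ p q α β : ℝ) (hpq : p ^ 2 + q ^ 2 = 1) (hα : α ≠ 0) (hβ : β ≠ 0)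
    (x y : V) (hx : x = (α * (lin p (-q) q p (pp τ)).1, α * (lin p (-q) q p (pp τ)).2))
    (hy : y = (β * (lin p (-q) q p (pm τ)).1, β * (lin p (-q) q p (pm τ)).2)) :
    |Kf f x y - 1 / 2 * Nf f (pp 0) (pm 0) * (Xh x - Xh y)| ≤ M := by
  have hdet : p * p - -q * q = 1 := by linarith
  have hM : 0 ≤ M := (abs_nonneg _).trans (m0 hf _ _ (pp_det 0))
  have hch := Real.cosh_pos (2 * τ)
  have mm := hf.m2 (pp τ) (pm τ)
  have b1 : ∀ p : V × V, |YY p.1| ≤ 1 * (1 + nq2 p) ^ 2 := fun p => by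
    refine (YY_le _).trans ?_
    have h1 := nq_nonneg p.1
    have h2 := nq_nonneg p.2
    simp only [nq2]
    nlinarith [mul_nonneg h1 h2]
  have b2 : ∀ p : V × V, |XX p.1| ≤ 1 * (1 + nq2 p) ^ 2 := fun p => by
    refine (XX_le _).trans ?_
    have h1 := nq_nonneg p.1
    have h2 := nq_nonneg p.2
    simp only [nq2]
    nlinarith [mul_nonneg h1 h2]
  have i1 := expInt2.integrable mm (P := fun p => YY p.1) (by fun_prop)
      (fun p => hf.bdd _ _ _ _) b1
  have i2 := expInt2.integrable mm (P := fun p => XX p.1) (by fun_prop)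
      (fun p => hf.bdd _ _ _ _) b2
  have hK : Kf f x y = -2 * p * q * Nf f (pp τ) (pm τ) := by
    have hm := lin_mp p (-q) q p (by rw [hdet]; simp)
    have mxy := hf.m2 x y
    have := mp_integral (mp_prod hm hm)
      (G := fun p : V × V => f x y p.1 p.2 * XX p.1 * Real.exp (-(nq2 p))) (by fun_prop)
    rw [Kf, ← this]
    have h3 : ∫ w : V × V, f x y (lin p (-q) q p w.1) (lin p (-q) q p w.2) *
        XX (lin p (-q) q p w.1) * 
        Real.exp (-(nq2 (lin p (-q) q p w.1, lin p (-q) q p w.2))) = 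
        (p ^ 2 - q ^ 2) * Kf f (pp τ) (pm τ) + (-2 * p * q) * Nf f (pp τ) (pm τ) := by
      rw [Kf, Nf, ← integral_const_mul, ← integral_const_mul, ← integral_add]
      · congr 1; ext w
        have e1 : f x y (lin p (-q) q p w.1) (lin p (-q) q p w.2) = f (pp τ) (pm τ) w.1 w.2 := by
          rw [hx, hy, hf.hom _ hα, hf.hom2 _ hβ, hf.inv _ _ _ _ (by rw [hdet]; norm_num)]
        have e2 : nq2 (lin p (-q) q p w.1, lin p (-q) q p w.2) = nq2 w := by
          have : nq2 (lin p (-q) q p w.1, lin p (-q) q p w.2) = (p ^ 2 + q ^ 2) * nq2 w := by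
            simp only [nq2, nq, lin]; ring
          rw [this, hpq, one_mul]
        rw [e1, e2]
        simp only [XX, YY, lin]; ring
      · exact i2.const_mul _
      · exact i1.const_mul _
    rw [h3, K_zero hf]; ring
  have e00 : Real.exp τ * Real.exp (-τ) = 1 := by rw [← Real.exp_add]; simp
  have ech : Real.cosh (2 * τ) = (Real.exp τ ^ 2 + Real.exp (-τ) ^ 2) / 2 := by
    rw [Real.cosh_eq, ← Real.exp_nat_mul, ← Real.exp_nat_mul]; push_cast; ring_nf
  have hxh : Xh x - Xh y = -4 * p * q / Real.cosh (2 * τ) := by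
    have nx : nq x = Real.pi * α ^ 2 * (2 * Real.cosh (2 * τ)) := by
      have : nq x = Real.pi * α ^ 2 * ((p ^ 2 + q ^ 2) * (2 * Real.cosh (2 * τ))) := by
        rw [hx, ech]; simp only [nq, lin, pp]; ring
      rw [this, hpq, one_mul]
    have ny : nq y = Real.pi * β ^ 2 * (2 * Real.cosh (2 * τ)) := by
      have : nq y = Real.pi * β ^ 2 * ((p ^ 2 + q ^ 2) * (2 * Real.cosh (2 * τ))) := by
        rw [hy, ech]; simp only [nq, lin, pm]; ring
      rw [this, hpq, one_mul]
    have hx2 : Xh x = ((p ^ 2 - q ^ 2) * (Real.exp τ ^ 2 - Real.exp (-τ) ^ 2) - 4 * p * q) / (2 * Real.cosh (2 * τ)) := by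
      have : XX x = Real.pi * α ^ 2 * ((p ^ 2 - q ^ 2) * (Real.exp τ ^ 2 - Real.exp (-τ) ^ 2) - 4 * p * q * (Real.exp τ * Real.exp (-τ))) := by
        rw [hx]; simp only [XX, lin, pp]; ring
      rw [Xh, nx, this, e00]
      have := Real.pi_pos
      field_simp
    have hy2 : Xh y = ((p ^ 2 - q ^ 2) * (Real.exp τ ^ 2 - Real.exp (-τ) ^ 2) + 4 * p * q) / (2 * Real.cosh (2 * τ)) := by
      have : XX y = Real.pi * β ^ 2 * ((p ^ 2 - q ^ 2) * (Real.exp τ ^ 2 - Real.exp (-τ) ^ 2) + 4 * p * q * (Real.exp τ * Real.exp (-τ))) := by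
        rw [hy]; simp only [XX, lin, pm]; ring
      rw [Xh, ny, this, e00]
      have := Real.pi_pos
      field_simp
    rw [hx2, hy2]; field_simp; ring
  have hJ := J_bound hf τ
  have e : Kf f x y - 1 / 2 * Nf f (pp 0) (pm 0) * (Xh x - Xh y) = 
      -(2 * p * q) / Real.cosh (2 * τ) * 
        (Real.cosh (2 * τ) * Nf f (pp τ) (pm τ) - Nf f (pp 0) (pm 0)) := by
    rw [hK, hxh]; field_simp; ring
  rw [e, abs_mul, abs_div, abs_neg, abs_of_pos hch]
  have h1 : |2 * p * q| ≤ 1 := by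
    rw [abs_le]; constructor <;> nlinarith [sq_nonneg (p + q), sq_nonneg (p - q)]
  have h2 : |Real.sinh (2 * τ)| ≤ Real.cosh (2 * τ) :=
    abs_le_of_sq_le_sq (by rw [Real.cosh_sq]; linarith) hch.le
  calc |2 * p * q| / Real.cosh (2 * τ) * |Real.cosh (2 * τ) * Nf f (pp τ) (pm τ) - Nf f (pp 0) (pm 0)|
      ≤ 1 / Real.cosh (2 * τ) * (M * Real.cosh (2 * τ)) := by
        gcongr
        exact hJ.trans (by gcongr)
    _ = M := by field_simp

lemma polar (x : V) (hx : x ≠ 0) : ∃ r a : ℝ, r ≠ 0 ∧ x = (r * Real.cos a, r * Real.sin a) := by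
  refine ⟨‖(⟨x.1, x.2⟩ : ℂ)‖, Complex.arg ⟨x.1, x.2⟩, ?_, ?_⟩
  · rw [norm_ne_zero_iff]
    intro h
    rw [Complex.ext_iff] at h
    exact hx (Prod.ext h.1 h.2)
  · have h1 := Complex.norm_mul_cos_arg ⟨x.1, x.2⟩
    have h2 := Complex.norm_mul_sin_arg ⟨x.1, x.2⟩
    simp only at h1 h2
    rw [h1, h2]

lemma K_lem (hf : Good f S M) (x y : V) (hxy : det x y ≠ 0) :
    |Kf f x y - 1 / 2 * Nf f (pp 0) (pm 0) * (Xh x - Xh y)| ≤ M := by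
  have hx : x ≠ 0 := by rintro rfl; simp [det] at hxy
  have hy : y ≠ 0 := by rintro rfl; simp [det] at hxy
  obtain ⟨r, a, hr, hxa⟩ := polar x hx
  obtain ⟨r', b, hr', hyb⟩ := polar y hy
  obtain ⟨φ, θ, rfl, rfl⟩ : ∃ φ θ : ℝ, a = θ + φ ∧ b = θ - φ :=
    ⟨(a - b) / 2, (a + b) / 2, by ring, by ring⟩
  have hθ := Real.cos_sq_add_sin_sq θ
  rw [Real.cos_add, Real.sin_add] at hxa
  rw [Real.cos_sub, Real.sin_sub] at hyb
  have hd : det x y = -2 * r * r' * (Real.sin φ * Real.cos φ) := by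
    rw [hxa, hyb]; simp only [det]
    linear_combination -2 * r * r' * (Real.sin φ * Real.cos φ) * hθ
  have hsc : Real.sin φ * Real.cos φ ≠ 0 := by
    intro h; rw [h] at hd; simp at hd; exact hxy hd
  have hc : Real.cos φ ≠ 0 := right_ne_zero_of_mul hsc
  have tau : ∀ s c : ℝ, c ≠ 0 → 0 < s * c → ∃ τ : ℝ, s = c * Real.exp (-τ) * Real.exp (-τ) := by
    intro s c hc h
    have hp : 0 < s / c := by rw [div_eq_mul_inv]; rcases lt_or_gt_of_ne hc with h' | h'
                              · have := inv_lt_zero.2 h'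
                                nlinarith [mul_pos_of_neg_of_neg (show s < 0 by nlinarith) this]
                              · have := inv_pos.2 h'
                                have : 0 < s := by nlinarith
                                positivity
    refine ⟨-(Real.log (s / c) / 2), ?_⟩
    rw [mul_assoc, ← Real.exp_add, neg_neg, add_halves, Real.exp_log hp]
    field_simp
  have e00 : ∀ τ : ℝ, Real.exp (-τ) * Real.exp τ = 1 := fun τ => by rw [← Real.exp_add]; simp
  rcases lt_or_gt_of_ne hsc with h | h
  · obtain ⟨τ, hτ⟩ := tau (- Real.sin φ) (Real.cos φ) hc (by linarith)
    have := K_core hf τ (Real.cos θ) (Real.sin θ) (r' * (Real.cos φ * Real.exp (-τ)))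
      (r * (Real.cos φ * Real.exp (-τ))) hθ (by simp [hr', hc]) (by simp [hr, hc]) y x
      (by
        have hτ' : Real.sin φ = -(Real.cos φ * Real.exp (-τ) * Real.exp (-τ)) := by linarith
        rw [hyb, hτ']; simp only [lin, pp]
        ext <;> simp only
        · linear_combination -r' * Real.cos φ * Real.cos θ * e00 τ
        · linear_combination -r' * Real.cos φ * Real.sin θ * e00 τ)
      (by
        have hτ' : Real.sin φ = -(Real.cos φ * Real.exp (-τ) * Real.exp (-τ)) := by linarith
        rw [hxa, hτ']; simp only [lin, pm]
        ext <;> simp only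
        · linear_combination -r * Real.cos φ * Real.cos θ * e00 τ
        · linear_combination -r * Real.cos φ * Real.sin θ * e00 τ)
    rw [Kf_swap hf, ← abs_neg] at this
    convert this using 2; ring
  · obtain ⟨τ, hτ⟩ := tau (Real.sin φ) (Real.cos φ) hc (by linarith)
    exact K_core hf τ (Real.cos θ) (Real.sin θ) (r * (Real.cos φ * Real.exp (-τ)))
      (r' * (Real.cos φ * Real.exp (-τ))) hθ (by simp [hr, hc]) (by simp [hr', hc]) x y
      (by
        rw [hxa, hτ]; simp only [lin, pp]
        ext <;> simp only
        · linear_combination -r * Real.cos φ * Real.cos θ * e00 τ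
        · linear_combination -r * Real.cos φ * Real.sin θ * e00 τ)
      (by
        rw [hyb, hτ]; simp only [lin, pm]
        ext <;> simp only
        · linear_combination -r' * Real.cos φ * Real.cos θ * e00 τ
        · linear_combination -r' * Real.cos φ * Real.sin θ * e00 τ)

noncomputable def Gf (f : V → V → V → V → ℝ) (x y z : V) : ℝ :=
  ∫ w : V, f x y z w * XX w * Real.exp (-(nq w))
noncomputable def gf (f : V → V → V → V → ℝ) (x y z : V) : ℝ :=
  ∫ w : V, f x y z w * Real.exp (-(nq w))

lemma Good.m1 (hf : Good f S M) (x y z : V) : Measurable fun w : V => f x y z w :=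
  hf.m (by fun_prop) (by fun_prop) (by fun_prop) (by fun_prop)

lemma XX2_le (p : V × V) : |XX p.1| ≤ 1 * (1 + nq2 p) ^ 2 := by
  refine (XX_le _).trans ?_
  have h1 := nq_nonneg p.1
  have h2 := nq_nonneg p.2
  simp only [nq2]
  nlinarith [mul_nonneg h1 h2]

lemma G_bound (hf : Good f S M) (x y z : V) (hxy : det x y ≠ 0) (hxz : det x z ≠ 0)
    (hyz : det y z ≠ 0) : |Gf f x y z| ≤ 4 * M := by
  have i (F : V × V → ℝ) (hF : Measurable F) (hS : ∀ p, |F p| ≤ S) :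
      Integrable (fun p => F p * XX p.1 * Real.exp (-(nq2 p))) :=
    expInt2.integrable hF (by fun_prop) hS XX2_le
  have i1 := i _ (hf.m2 y z) (fun p => hf.bdd _ _ _ _)
  have i2 := i _ (hf.m2 x z) (fun p => hf.bdd _ _ _ _)
  have i3 := i _ (hf.m2 x y) (fun p => hf.bdd _ _ _ _)
  have m4 : Measurable (fun p : V × V => f x y z p.2) := (hf.m1 x y z).comp measurable_snd
  have m5 : Measurable (fun p : V × V => f x y z p.1) := (hf.m1 x y z).comp measurable_fst
  have i4 := i _ m4 (fun p => hf.bdd _ _ _ _)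
  have i5 := i _ m5 (fun p => hf.bdd _ _ _ _)
  have v4 : ∫ p : V × V, f x y z p.2 * XX p.1 * Real.exp (-(nq2 p)) = 0 := by
    refine mp_zero (mp_prod mpJ mp_id) ((m4.mul (XX_meas.comp measurable_fst)).mul (by fun_prop)) fun p => ?_
    simp only [nq2, nqJ, XXJ]; ring
  have v5 : ∫ p : V × V, f x y z p.1 * XX p.1 * Real.exp (-(nq2 p)) = Gf f x y z := by
    have := int_split2 (fun w => f x y z w * XX w) (fun _ => 1)
    simp only [one_mul, mul_one, int_e] at this
    exact this
  have e1 : ∫ p : V × V, nq p.1 * Real.exp (-(nq2 p)) = 1 := by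
    have := int_split2 nq (fun _ => 1)
    simpa only [one_mul, mul_one, int_e, int_nq] using this
  have key := int_le (n := nq2) (hf.H3 x y z hxy hxz hyz) (P := fun p => XX p.1)
    (P0 := fun p => nq p.1) (fun p => XX_le _)
    (by
      have := integral_undef.mt (by rw [e1]; exact one_ne_zero)
      exact not_not.1 this)
  rw [e1, mul_one] at key
  have e3 : ∀ p : V × V, D f x y z p.1 p.2 * XX p.1 * Real.exp (-(nq2 p)) =
      f y z p.1 p.2 * XX p.1 * Real.exp (-(nq2 p)) -
      f x z p.1 p.2 * XX p.1 * Real.exp (-(nq2 p)) +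
      f x y p.1 p.2 * XX p.1 * Real.exp (-(nq2 p)) -
      f x y z p.2 * XX p.1 * Real.exp (-(nq2 p)) +
      f x y z p.1 * XX p.1 * Real.exp (-(nq2 p)) := fun p => by unfold D; ring
  simp_rw [e3] at key
  rw [int5 i1 i2 i3 i4 i5, v4, v5] at key
  change |Kf f y z - Kf f x z + Kf f x y - 0 + Gf f x y z| ≤ M at key
  have k1 := K_lem hf y z hyz
  have k2 := K_lem hf x z hxz
  have k3 := K_lem hf x y hxy
  rw [abs_le] at *
  constructor <;> linarith [key.1, key.2, k1.1, k1.2, k2.1, k2.2, k3.1, k3.2]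

lemma gf_inv (hf : Good f S M) (a b c d : ℝ) (hd : |a * d - b * c| = 1)
    (hn : ∀ w, nq (lin a b c d w) = nq w) (x y z : V) :
    gf f (lin a b c d x) (lin a b c d y) (lin a b c d z) = gf f x y z := by
  have hm := lin_mp a b c d hd
  have mm := hf.m1 (lin a b c d x) (lin a b c d y) (lin a b c d z)
  have := mp_integral hm (G := fun w => f (lin a b c d x) (lin a b c d y) (lin a b c d z) w *
    Real.exp (-(nq w))) (by fun_prop)
  rw [gf, ← this, gf]
  congr 1; ext w
  rw [hn, hf.inv _ _ _ _ (by intro h0; rw [h0] at hd; simp at hd)]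

lemma g_s12 (hf : Good f S M) (x y z : V) : gf f y x z = - gf f x y z := by
  unfold gf; rw [← integral_neg]; congr 1; ext w; rw [hf.s12]; ring
lemma g_s23 (hf : Good f S M) (x y z : V) : gf f x z y = - gf f x y z := by
  unfold gf; rw [← integral_neg]; congr 1; ext w; rw [hf.s23]; ring
lemma g_hom (hf : Good f S M) (c : ℝ) (hc : c ≠ 0) (x y z : V) :
    gf f (c * x.1, c * x.2) y z = gf f x y z := by
  unfold gf; simp_rw [hf.hom c hc]
lemma g_hom2 (hf : Good f S M) (c : ℝ) (hc : c ≠ 0) (x y z : V) :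
    gf f x (c * y.1, c * y.2) z = gf f x y z := by
  unfold gf; simp_rw [hf.hom2 c hc]
lemma g_hom3 (hf : Good f S M) (c : ℝ) (hc : c ≠ 0) (x y z : V) :
    gf f x y (c * z.1, c * z.2) = gf f x y z := by
  unfold gf; simp_rw [hf.hom3 c hc]

noncomputable def as (s : ℝ) : V → V := lin (Real.exp s) 0 0 (Real.exp (-s))

lemma as_add (τ s : ℝ) (x : V) : as (τ + s) x = as s (as τ x) := by
  simp only [as, lin, neg_add, Real.exp_add]; ext <;> simp <;> ring

lemma det_as (s : ℝ) (x y : V) : det (as s x) (as s y) = det x y := by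
  have := as_det s
  simp only [as, det, lin]
  linear_combination (x.1 * y.2 - x.2 * y.1) * this

lemma g_shift (hf : Good f S M) (x y z : V) (s : ℝ) : gf f (as s x) (as s y) (as s z) =
    ∫ p : V × V, f x y z p.1 *
      (1 + 0 * XX (lin (Real.exp s) 0 0 (Real.exp (-s)) p.1)
        + 0 * YY (lin (Real.exp s) 0 0 (Real.exp (-s)) p.1)) *
      Real.exp (-(nq (lin (Real.exp s) 0 0 (Real.exp (-s)) p.1)
        + nq (lin (Real.exp s) 0 0 (Real.exp (-s)) p.2))) := by
  have hm := lin_mp (Real.exp s) 0 0 (Real.exp (-s)) (by rw [as_det]; simp)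
  have h1 : gf f (as s x) (as s y) (as s z) = ∫ p : V × V, f (as s x) (as s y) (as s z) p.1 *
      Real.exp (-(nq2 p)) := by
    have := int_split2 (fun w => f (as s x) (as s y) (as s z) w) (fun _ => 1)
    simp only [one_mul, mul_one, int_e] at this
    exact this.symm
  have h2 : Measurable (fun p : V × V => f (as s x) (as s y) (as s z) p.1) :=
    (hf.m1 (as s x) (as s y) (as s z)).comp measurable_fst
  have := mp_integral (mp_prod hm hm)
    (G := fun p : V × V => f (as s x) (as s y) (as s z) p.1 * Real.exp (-(nq2 p)))
    (h2.mul (by fun_prop))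
  rw [h1, ← this]
  congr 1; ext p
  simp only [as]
  rw [hf.inv _ _ _ _ (by rw [as_det]; norm_num)]
  simp only [nq2]; ring

lemma g_deriv (hf : Good f S M) (x y z : V) (τ : ℝ) :
    HasDerivAt (fun t => gf f (as t x) (as t y) (as t z))
      (-2 * Gf f (as τ x) (as τ y) (as τ z)) τ := by
  set x' := as τ x
  set y' := as τ y
  set z' := as τ z
  have mm : Measurable (fun p : V × V => f x' y' z' p.1) := (hf.m1 x' y' z').comp measurable_fst
  have h := quad_deriv (F := fun p => f x' y' z' p.1) mm
    (fun p => hf.bdd _ _ _ _)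
    (a := fun s => Real.exp s) (b := fun _ => 0) (c := fun _ => 0) (d := fun s => Real.exp (-s))
    (a' := fun s => Real.exp s) (b' := fun _ => 0) (c' := fun _ => 0)
    (d' := fun s => -Real.exp (-s)) (B := Real.exp 1) 1 0 0
    (fun t => Real.hasDerivAt_exp t) (fun t => hasDerivAt_const _ _) (fun t => hasDerivAt_const _ _)
    (fun t => by simpa using (hasDerivAt_neg t).exp) as_det
    (fun t ht => by
      have := abs_lt.1 ht
      simp only [Real.abs_exp, abs_zero, Real.exp_le_exp]
      refine ⟨by linarith, by positivity, by positivity, by linarith⟩)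
    (fun t ht => by
      have := abs_lt.1 ht
      simp only [abs_neg, Real.abs_exp, abs_zero, Real.exp_le_exp]
      refine ⟨by linarith, by positivity, by positivity, by linarith⟩)
  simp only at h
  simp_rw [← g_shift hf x' y' z'] at h
  simp_rw [x', y', z', ← as_add τ] at h
  have h3 := HasDerivAt.comp_sub_const τ τ
    (f := fun s => gf f (as (τ + s) x) (as (τ + s) y) (as (τ + s) z)) 
    (by rw [sub_self]; exact h)
  simp only [add_sub_cancel] at h3
  refine h3.congr_deriv ?_
  have e1 : ∀ w : V, lin (Real.exp 0) 0 0 (Real.exp (-0)) w = w := fun w => by simp [lin]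
  have e2 : ∀ w : V, lin (Real.exp 0) 0 0 (-Real.exp (-0)) w = (w.1, -w.2) := fun w => by simp [lin]
  have v4 : ∫ p : V × V, f x' y' z' p.1 * XX p.2 * Real.exp (-(nq2 p)) = 0 := by
    refine mp_zero (mp_prod mp_id mpJ) ((mm.mul (XX_meas.comp measurable_snd)).mul (by fun_prop)) fun p => ?_
    simp only [nq2, nqJ, XXJ]; ring
  have v5 : ∫ p : V × V, f x' y' z' p.1 * XX p.1 * Real.exp (-(nq2 p)) = Gf f x' y' z' := by
    have := int_split2 (fun w => f x' y' z' w * XX w) (fun _ => 1)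
    simp only [one_mul, mul_one, int_e] at this
    exact this
  have i4 := expInt2.integrable mm (P := fun p => XX p.2) (by fun_prop)
    (fun p => hf.bdd _ _ _ _) (A := 1) (fun p => by
      have := XX2_le (p.2, p.1)
      simp only [nq2] at this ⊢
      rwa [add_comm (nq p.2)] at this)
  have i5 := expInt2.integrable mm (P := fun p => XX p.1) (by fun_prop)
    (fun p => hf.bdd _ _ _ _) XX2_le
  have : -2 * Gf f x' y' z' = -2 * Gf f x' y' z' + -2 *
    ∫ p : V × V, f x' y' z' p.1 * XX p.2 * Real.exp (-(nq2 p)) := by rw [v4]; ring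
  rw [this, ← v5, ← integral_const_mul, ← integral_const_mul, ← integral_add]
  · congr 1; ext p
    simp only [e1, e2, bN, bY, bX, nq2, YY, XX]
    ring
  · exact i5.const_mul _
  · exact i4.const_mul _

lemma g_lip (hf : Good f S M) (x y z : V) (hxy : det x y ≠ 0) (hxz : det x z ≠ 0)
    (hyz : det y z ≠ 0) (τ : ℝ) :
    |gf f (as τ x) (as τ y) (as τ z) - gf f x y z| ≤ 8 * M * |τ| := by
  have h := Convex.norm_image_sub_le_of_norm_hasDerivWithin_le
    (f := fun t => gf f (as t x) (as t y) (as t z)) (s := univ) (x := 0) (y := τ) (C := 8 * M)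
    (fun t _ => (g_deriv hf x y z t).hasDerivWithinAt)
    (fun t _ => by
      have := G_bound hf (as t x) (as t y) (as t z) (by rwa [det_as]) (by rwa [det_as])
        (by rwa [det_as])
      rw [norm_mul, Real.norm_eq_abs, Real.norm_eq_abs, abs_neg, abs_two]
      linarith) convex_univ (mem_univ _) (mem_univ _)
  have e : ∀ w, as 0 w = w := fun w => by simp [as, lin]
  simpa only [e, sub_zero, Real.norm_eq_abs] using h

lemma g_T (hf : Good f S M) (k : ℝ) (hk0 : 0 < k) (hk1 : k < 1) :
    |gf f (1, k) (k ^ 3, 1) (-k, 1)| ≤ 4 * M * |Real.log k| := by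
  set ℓ := Real.log k / 2 with hℓ
  set r := Real.exp ℓ with hr
  have hrk : k = r ^ 2 := by
    rw [hr, ← Real.exp_nat_mul, hℓ]; push_cast
    rw [mul_div_cancel₀ _ (two_ne_zero), Real.exp_log hk0]
  have hr0 : 0 < r := Real.exp_pos _
  have hri : Real.exp (-ℓ) = r⁻¹ := Real.exp_neg _
  have h0 : gf f (1, k ^ 2) (k ^ 2, 1) (-1, 1) = 0 := by
    have h1 := gf_inv hf 0 1 1 0 (by norm_num) (fun w => by simp only [nq, lin]; ring)
      (1, k ^ 2) (k ^ 2, 1) (-1, 1)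
    have e1 : lin 0 1 1 0 (1, k ^ 2) = (k ^ 2, 1) := by simp [lin]
    have e2 : lin 0 1 1 0 (k ^ 2, 1) = (1, k ^ 2) := by simp [lin]
    have e3 : lin 0 1 1 0 (-1, 1) = ((-1) * ((-1, 1) : V).1, (-1) * ((-1, 1) : V).2) := by simp [lin]
    rw [e1, e2, e3, g_hom3 hf _ (by norm_num), g_s12 hf] at h1
    linarith
  have h2 := g_lip hf (1, k ^ 2) (k ^ 2, 1) (-1, 1) 
    (by simp only [det]; have : k ^ 2 < 1 := by nlinarith
        nlinarith) (by simp only [det]; nlinarith) (by simp only [det]; nlinarith) ℓ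
  rw [h0, sub_zero] at h2
  have e1 : as ℓ (1, k ^ 2) = (r * ((1, k) : V).1, r * ((1, k) : V).2) := by
    simp only [as, lin, hri, ← hr, hrk]; ext <;> simp only <;> field_simp <;> ring
  have e2 : as ℓ (k ^ 2, 1) = (r⁻¹ * ((k ^ 3, 1) : V).1, r⁻¹ * ((k ^ 3, 1) : V).2) := by
    simp only [as, lin, hri, ← hr, hrk]; ext <;> simp only <;> field_simp <;> ring
  have e3 : as ℓ (-1, 1) = (r⁻¹ * ((-k, 1) : V).1, r⁻¹ * ((-k, 1) : V).2) := by
    simp only [as, lin, hri, ← hr, hrk]; ext <;> simp only <;> field_simp <;> ring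
  rw [e1, e2, e3, g_hom hf _ hr0.ne', g_hom2 hf _ (inv_ne_zero hr0.ne'),
    g_hom3 hf _ (inv_ne_zero hr0.ne')] at h2
  refine h2.trans (le_of_eq ?_)
  rw [hℓ, abs_div, abs_two]; ring

end SA

namespace SA

variable {f : V → V → V → V → ℝ} {S M : ℝ}

lemma g_s13 (hf : Good f S M) (x y z : V) : gf f z y x = - gf f x y z := by
  rw [g_s12 hf, g_s23 hf, g_s12 hf, neg_neg]

lemma rect (hf : Good f S M) (k : ℝ) (hk0 : 0 < k) (hk1 : k < 1)
    (hD : ∀ᵐ v : V, |D f (1, k) (k ^ 3, 1) (-k, 1) (-1, k ^ 3) v| ≤ M) :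
    |f (1, k) (k ^ 3, 1) (-k, 1) (-1, k ^ 3)| ≤ M + 16 * M * |Real.log k| := by
  set x0 : V := (1, k) with h0
  set x1 : V := (k ^ 3, 1) with h1
  set x2 : V := (-k, 1) with h2
  set x3 : V := (-1, k ^ 3) with h3
  have jd : |(0:ℝ) * 0 - -1 * 1| = 1 := by norm_num
  have J0 : lin 0 (-1) 1 0 x0 = x2 := by simp [lin, h0, h2]
  have J1 : lin 0 (-1) 1 0 x1 = x3 := by simp [lin, h1, h3]
  have J2 : lin 0 (-1) 1 0 x2 = ((-1) * x0.1, (-1) * x0.2) := by simp [lin, h0, h2]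
  have J3 : lin 0 (-1) 1 0 x3 = ((-1) * x1.1, (-1) * x1.2) := by simp [lin, h1, h3]
  have a1 : gf f x1 x2 x3 = gf f x0 x1 x3 := by
    have := gf_inv hf 0 (-1) 1 0 jd nqJ x0 x1 x3
    rw [J0, J1, J3, g_hom3 hf _ (by norm_num)] at this
    rw [← this, g_s23 hf, g_s12 hf, g_s23 hf, g_s12 hf]; simp
  have a2 : gf f x0 x2 x3 = gf f x0 x1 x2 := by
    have := gf_inv hf 0 (-1) 1 0 jd nqJ x0 x1 x2
    rw [J0, J1, J2, g_hom3 hf _ (by norm_num)] at this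
    rw [← this, g_s23 hf x2 x0, g_s12 hf]
  have a3 : gf f x0 x1 x2 = - gf f x0 x1 x3 := by
    obtain ⟨A, hA, hA2⟩ : ∃ A : ℝ, 0 < A ∧ A ^ 2 = 1 + k ^ 2 :=
      ⟨√(1 + k ^ 2), by positivity, Real.sq_sqrt (by positivity)⟩
    obtain ⟨B, hB, hB2⟩ : ∃ B : ℝ, 0 < B ∧ B ^ 2 = 1 + k ^ 6 :=
      ⟨√(1 + k ^ 6), by positivity, Real.sq_sqrt (by positivity)⟩
    set C := (k ^ 3 - k) / (A * B) with hC
    set s := (1 + k ^ 4) / (A * B) with hs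
    have hcs : C ^ 2 + s ^ 2 = 1 := by
      rw [hC, hs]; field_simp; rw [hA2, hB2]; ring
    have S0 : lin C s s (-C) x0 = (A / B * x1.1, A / B * x1.2) := by
      simp only [lin, h0, h1, hC, hs]
      ext <;> simp only <;> field_simp <;> rw [hA2] <;> ring
    have S1 : lin C s s (-C) x1 = (B / A * x0.1, B / A * x0.2) := by
      simp only [lin, h0, h1, hC, hs]
      ext <;> simp only <;> field_simp <;> rw [hB2] <;> ring
    have S2 : lin C s s (-C) x2 = (-(A / B) * x3.1, -(A / B) * x3.2) := by
      simp only [lin, h2, h3, hC, hs]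
      ext <;> simp only <;> field_simp <;> rw [hA2] <;> ring
    have := gf_inv hf C s s (-C) (by rw [ref_det hcs]; norm_num) (ref_nq hcs) x0 x1 x2
    rw [S0, S1, S2, g_hom hf _ (by positivity), g_hom2 hf _ (by positivity),
      g_hom3 hf _ (neg_ne_zero.2 (by positivity)), g_s12 hf] at this
    linarith
  have i (F : V → ℝ) (hF : Measurable F) (hS : ∀ p, |F p| ≤ S) :
      Integrable (fun p => F p * Real.exp (-(nq p))) := by
    have := expInt1.integrable hF (P := fun _ => 1) (by fun_prop) hS (A := 1) (fun w => by
      have := nq_nonneg w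
      rw [abs_one, one_mul]; nlinarith)
    simpa using this
  have key := int_le (n := nq) hD (P := fun p => 1) (P0 := fun p => 1) (by simp)
    (by simpa using expInt1.2.2 1 one_pos)
  have e3 : ∀ v : V, D f x0 x1 x2 x3 v * 1 * Real.exp (-(nq v)) =
      f x1 x2 x3 v * Real.exp (-(nq v)) - f x0 x2 x3 v * Real.exp (-(nq v))
      + f x0 x1 x3 v * Real.exp (-(nq v)) - f x0 x1 x2 v * Real.exp (-(nq v))
      + f x0 x1 x2 x3 * Real.exp (-(nq v)) := fun p => by unfold D; ring
  simp_rw [e3] at key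
  rw [int5 (i _ (hf.m1 _ _ _) (fun p => hf.bdd _ _ _ _)) (i _ (hf.m1 _ _ _) (fun p => hf.bdd _ _ _ _))
    (i _ (hf.m1 _ _ _) (fun p => hf.bdd _ _ _ _)) (i _ (hf.m1 _ _ _) (fun p => hf.bdd _ _ _ _))
    (i (fun _ => f x0 x1 x2 x3) (by fun_prop) (fun p => hf.bdd _ _ _ _)), integral_const_mul] at key
  simp only [one_mul, int_e, mul_one] at key
  change |gf f x1 x2 x3 - gf f x0 x2 x3 + gf f x0 x1 x3 - gf f x0 x1 x2 + f x0 x1 x2 x3| ≤ M at key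
  have gT := g_T hf k hk0 hk1
  rw [a1, a2] at key
  change |gf f x0 x1 x2| ≤ _ at gT
  rw [abs_le] at *
  constructor <;> linarith [key.1, key.2, gT.1, gT.2]

end SA

namespace SA

lemma pull_quant {φ φ' : ℝ → ℝ} {U N : Set ℝ} (hφ : Measurable φ) (hU : MeasurableSet U)
    (hN : MeasurableSet N) (hd : ∀ x ∈ U, HasDerivAt φ (φ' x) x) (hi : InjOn φ U) (c : ℝ)
    (hc : ∀ x ∈ U, c ≤ |φ' x|) :
    ENNReal.ofReal c * volume (U ∩ φ ⁻¹' N) ≤ volume N := by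
  have hm : MeasurableSet (U ∩ φ ⁻¹' N) := hU.inter (hφ hN)
  have h := lintegral_image_eq_lintegral_abs_deriv_mul hm
    (fun x hx => (hd x hx.1).hasDerivWithinAt) (hi.mono inter_subset_left) (fun _ => 1)
  simp only [lintegral_const, one_mul, mul_one, Measure.restrict_apply, MeasurableSet.univ,
    univ_inter] at h
  calc ENNReal.ofReal c * volume (U ∩ φ ⁻¹' N)
      = ∫⁻ x in U ∩ φ ⁻¹' N, ENNReal.ofReal c := by simp
    _ ≤ ∫⁻ x in U ∩ φ ⁻¹' N, ENNReal.ofReal |φ' x| :=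
        setLIntegral_mono' hm fun x hx => ENNReal.ofReal_le_ofReal (hc x hx.1)
    _ = volume (φ '' (U ∩ φ ⁻¹' N)) := h.symm
    _ ≤ volume N := by
        apply measure_mono
        rintro _ ⟨x, hx, rfl⟩
        exact hx.2

lemma pull_null {φ φ' : ℝ → ℝ} {U N : Set ℝ} (hφ : Measurable φ) (hφ' : Measurable φ')
    (hU : MeasurableSet U) (hN : volume N = 0) (hd : ∀ x ∈ U, HasDerivAt φ (φ' x) x) (hi : InjOn φ U)
    (hc : ∀ x ∈ U, φ' x ≠ 0) :
    volume (U ∩ φ ⁻¹' N) = 0 := by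
  set N' := toMeasurable volume N
  have hN' : MeasurableSet N' := measurableSet_toMeasurable _ _
  have hN0 : volume N' = 0 := by rw [measure_toMeasurable]; exact hN
  refine measure_mono_null (t := U ∩ φ ⁻¹' N')
    (inter_subset_inter_right _ (preimage_mono (subset_toMeasurable _ _))) ?_
  have hm : MeasurableSet (U ∩ φ ⁻¹' N') := hU.inter (hφ hN')
  have h := lintegral_image_eq_lintegral_abs_deriv_mul hm
    (fun x hx => (hd x hx.1).hasDerivWithinAt) (hi.mono inter_subset_left) (fun _ => 1)
  simp only [lintegral_const, one_mul, mul_one, Measure.restrict_apply, MeasurableSet.univ,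
    univ_inter] at h
  have h0 : volume (φ '' (U ∩ φ ⁻¹' N')) = 0 := by
    apply measure_mono_null _ hN0
    rintro _ ⟨x, hx, rfl⟩
    exact hx.2
  rw [h0] at h
  have h2 := (setLIntegral_eq_zero_iff hm (f := fun x => ENNReal.ofReal |φ' x|)
    (by fun_prop)).1 h.symm
  refine measure_mono_null ?_ (ae_iff.1 h2)
  intro x hx
  simp only [mem_ofPred_eq, Classical.not_imp]
  refine ⟨hx, ?_⟩
  simpa using hc x hx.1

lemma qmp_of {φ φ' : ℝ → ℝ} {U : Set ℝ} (hφ : Measurable φ) (hφ' : Measurable φ')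
    (hU : MeasurableSet U) (hU0 : volume Uᶜ = 0)
    (hd : ∀ x ∈ U, HasDerivAt φ (φ' x) x) (hi : InjOn φ U) (hc : ∀ x ∈ U, φ' x ≠ 0) :
    Measure.QuasiMeasurePreserving φ (volume : Measure ℝ) volume := by
  refine ⟨hφ, Measure.AbsolutelyContinuous.mk fun N hN hN0 => ?_⟩
  rw [Measure.map_apply hφ hN]
  refine measure_mono_null (t := (U ∩ φ ⁻¹' N) ∪ Uᶜ) ?_
    (measure_union_null (pull_null hφ hφ' hU hN0 hd hi hc) hU0)
  intro x hx
  by_cases h : x ∈ U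
  · exact Or.inl ⟨h, hx⟩
  · exact Or.inr h

lemma qmp_affine (a b : ℝ) (ha : a ≠ 0) :
    Measure.QuasiMeasurePreserving (fun t : ℝ => a * t + b) volume volume := by
  refine qmp_of (U := univ) (φ' := fun _ => a) (by fun_prop) (by fun_prop) MeasurableSet.univ
    (by simp) (fun x _ => ?_) ?_ (fun _ _ => ha)
  · simpa using ((hasDerivAt_id x).const_mul a).add_const b
  · intro x _ y _ h
    have : a * x = a * y := by simpa using h
    exact mul_left_cancel₀ ha this

lemma qmp_inv : Measure.QuasiMeasurePreserving (fun t : ℝ => t⁻¹) volume volume := by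
  refine qmp_of (U := {0}ᶜ) (φ' := fun t => -(t ^ 2)⁻¹) (by fun_prop) (by fun_prop)
    (by measurability) (by simp) (fun x hx => hasDerivAt_inv hx) ?_ (fun x hx => ?_)
  · exact inv_injective.injOn
  · simpa using hx

lemma qmp_skew {ψ : ℝ → ℝ} {φ : ℝ → ℝ → ℝ}
    (hm : Measurable fun p : ℝ × ℝ => (ψ p.1, φ p.1 p.2))
    (hψ : Measure.QuasiMeasurePreserving ψ (volume : Measure ℝ) volume)
    (hφ : ∀ᵐ t : ℝ, Measure.QuasiMeasurePreserving (φ t) (volume : Measure ℝ) volume) :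
    Measure.QuasiMeasurePreserving (fun p : ℝ × ℝ => (ψ p.1, φ p.1 p.2)) volume volume := by
  refine ⟨hm, Measure.AbsolutelyContinuous.mk fun N hN hN0 => ?_⟩
  rw [Measure.map_apply hm hN]
  rw [Measure.volume_eq_prod] at hN0 ⊢
  rw [Measure.measure_prod_null hN] at hN0
  rw [Measure.measure_prod_null (hm hN)]
  filter_upwards [hψ.ae hN0, hφ] with t h1 h2
  exact h2.preimage_null h1

lemma qmp_swap : Measure.QuasiMeasurePreserving (Prod.swap : ℝ × ℝ → ℝ × ℝ) volume volume := by
  rw [Measure.volume_eq_prod]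
  exact Measure.measurePreserving_swap.quasiMeasurePreserving

lemma ae_ne (c : ℝ) : ∀ᵐ t : ℝ, t ≠ c := by
  simp [ae_iff]

lemma qmp_div : Measure.QuasiMeasurePreserving (fun w : V => w.1 / w.2) volume volume := by
  have h1 : Measure.QuasiMeasurePreserving (fun p : ℝ × ℝ => (id p.1, p.1⁻¹ * p.2 + 0))
      volume volume := by
    refine qmp_skew (ψ := id) (φ := fun t s => t⁻¹ * s + 0) (by fun_prop)
      (Measure.QuasiMeasurePreserving.id _) ?_
    filter_upwards [ae_ne 0] with t ht
    exact qmp_affine _ _ (inv_ne_zero ht)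
  have h2 : Measure.QuasiMeasurePreserving (Prod.snd : ℝ × ℝ → ℝ) volume volume := by
    rw [Measure.volume_eq_prod]
    exact Measure.quasiMeasurePreserving_snd
  have := (h2.comp h1).comp qmp_swap
  convert this using 2 with w
  simp [div_eq_inv_mul]

/-- the map `(s,t) ↦ (1/s, t/s)` -/
lemma qmp_T4 : Measure.QuasiMeasurePreserving (fun p : ℝ × ℝ => (p.1⁻¹, p.1⁻¹ * p.2 + 0))
    volume volume := by
  refine qmp_skew (ψ := fun t => t⁻¹) (φ := fun t s => t⁻¹ * s + 0) (by fun_prop) qmp_inv ?_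
  filter_upwards [ae_ne 0] with t ht
  exact qmp_affine _ _ (inv_ne_zero ht)

lemma qmp_T2 : Measure.QuasiMeasurePreserving (fun p : ℝ × ℝ => (1 - p.1, 1 - p.2))
    volume volume := by
  have := qmp_skew (ψ := fun t => -1 * t + 1) (φ := fun _ t => -1 * t + 1) (by fun_prop)
    (qmp_affine (-1) 1 (by norm_num))
    (Filter.Eventually.of_forall fun _ => qmp_affine (-1) 1 (by norm_num))
  convert this using 3 <;> ring

lemma qmp_T3 : Measure.QuasiMeasurePreserving (fun p : ℝ × ℝ => (p.1⁻¹, p.2⁻¹))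
    volume volume :=
  qmp_skew (ψ := fun t => t⁻¹) (φ := fun _ t => t⁻¹) (by fun_prop) qmp_inv
    (Filter.Eventually.of_forall fun _ => qmp_inv)

end SA

namespace SA

noncomputable def Lt (L : ℝ → ℝ) (t : ℝ) : ℝ :=
  if 0 < t ∧ t < 1 then L t else if 1 < t then - L t⁻¹ else if t < 0 then L (1 - t)⁻¹ else 0

variable {L : ℝ → ℝ}

lemma Lt_mid {t : ℝ} (h0 : 0 < t) (h1 : t < 1) : Lt L t = L t := by simp [Lt, h0, h1]
lemma Lt_big {t : ℝ} (h1 : 1 < t) : Lt L t = - L t⁻¹ := by simp [Lt, h1, h1.le]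
lemma Lt_neg {t : ℝ} (h1 : t < 0) : Lt L t = L (1 - t)⁻¹ := by
  have : ¬ (1 < t) := by linarith
  simp [Lt, h1, h1.le, this]
lemma Lt_zero : Lt L 0 = 0 := by simp [Lt]
lemma Lt_one : Lt L 1 = 0 := by simp [Lt]

lemma Lt_sub (hL : ∀ t, 0 < t → t < 1 → L (1 - t) = - L t) (t : ℝ) : Lt L (1 - t) = - Lt L t := by
  rcases lt_trichotomy t 0 with h | h | h
  · rw [Lt_neg h, Lt_big (by linarith)]
  · simp [h, Lt_zero, Lt_one]
  rcases lt_trichotomy t 1 with h' | h' | h'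
  · rw [Lt_mid h h', Lt_mid (by linarith) (by linarith), hL t h h']
  · simp [h', Lt_zero, Lt_one]
  · rw [Lt_big h', Lt_neg (by linarith)]; simp

lemma Lt_inv (hL : ∀ t, 0 < t → t < 1 → L (1 - t) = - L t) (t : ℝ) : Lt L t⁻¹ = - Lt L t := by
  rcases lt_trichotomy t 0 with h | h | h
  · rw [Lt_neg h, Lt_neg (inv_lt_zero.2 h)]
    rw [← hL]
    · congr 1
      have : t ≠ 0 := h.ne
      have : 1 - t ≠ 0 := by linarith
      have : t - 1 ≠ 0 := by intro h; apply this; linarith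
      rw [show 1 - t⁻¹ = (t - 1) / t by field_simp]
      field_simp
      ring
    · exact inv_pos.2 (by linarith)
    · exact inv_lt_one_of_one_lt₀ (by linarith)
  · simp [h, Lt_zero]
  rcases lt_trichotomy t 1 with h' | h' | h'
  · rw [Lt_mid h h', Lt_big (one_lt_inv_iff₀.2 ⟨h, h'⟩), inv_inv]
  · simp [h', Lt_one]
  · rw [Lt_big h', Lt_mid (inv_pos.2 h) (inv_lt_one_of_one_lt₀ h'), neg_neg]

lemma Lt_meas (hL : Measurable L) : Measurable (Lt L) := by
  unfold Lt
  refine Measurable.ite ?_ hL (Measurable.ite ?_ (by fun_prop) (Measurable.ite ?_ (by fun_prop)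
    (by fun_prop)))
  · exact measurableSet_Ioo
  · exact measurableSet_Ioi
  · exact measurableSet_Iio

lemma Lt_bdd {S : ℝ} (hL : ∀ t, |L t| ≤ S) (t : ℝ) : |Lt L t| ≤ S := by
  have := (abs_nonneg _).trans (hL 0)
  unfold Lt
  split_ifs <;> simp [hL, this]

noncomputable def cr (x y z w : V) : ℝ := det x y * det z w / (det x z * det y w)

noncomputable def ff (L : ℝ → ℝ) (x y z w : V) : ℝ := Lt L (cr x y z w)

lemma Lt_aux (hL : ∀ t, 0 < t → t < 1 → L (1 - t) = - L t) {A B C : ℝ} (h : A - B + C = 0) :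
    Lt L (-A / C) = - Lt L (A / B) := by
  by_cases hA : A = 0
  · simp [hA, Lt_zero]
  by_cases hB : B = 0
  · have : -A = C := by linarith
    have hC : C ≠ 0 := by rw [← this]; simpa using hA
    rw [this, div_self hC, hB]; simp [Lt_zero, Lt_one]
  by_cases hC : C = 0
  · have : A = B := by linarith
    rw [this, div_self hB, hC]; simp [Lt_zero, Lt_one]
  have e : -A / C = 1 - (1 - A / B)⁻¹ := by
    have : 1 - A / B = C / B := by field_simp; linarith
    rw [this]; field_simp; linarith
  rw [e, Lt_sub hL, Lt_inv hL, Lt_sub hL]; simp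

lemma det_lin (a b c d : ℝ) (x y : V) :
    det (lin a b c d x) (lin a b c d y) = (a * d - b * c) * det x y := by
  simp only [det, lin]; ring

lemma det_swap (x y : V) : det y x = - det x y := by simp only [det]; ring

lemma plucker (x y z w : V) : det x y * det z w - det x z * det y w + det x w * det y z = 0 := by
  simp only [det]; ring

lemma cr_inv (a b c d : ℝ) (h : a * d - b * c ≠ 0) (x y z w : V) :
    cr (lin a b c d x) (lin a b c d y) (lin a b c d z) (lin a b c d w) = cr x y z w := by
  simp only [cr, det_lin]
  rw [show (a * d - b * c) * det x y * ((a * d - b * c) * det z w) =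
    (a * d - b * c) ^ 2 * (det x y * det z w) by ring,
    show (a * d - b * c) * det x z * ((a * d - b * c) * det y w) =
    (a * d - b * c) ^ 2 * (det x z * det y w) by ring, mul_div_mul_left _ _ (pow_ne_zero 2 h)]

lemma cr_hom (c : ℝ) (h : c ≠ 0) (x y z w : V) : cr (c * x.1, c * x.2) y z w = cr x y z w := by
  have e (y : V) : det (c * x.1, c * x.2) y = c * det x y := by simp only [det]; ring
  simp only [cr, e]
  rw [mul_assoc, mul_assoc, mul_div_mul_left _ _ h]

lemma ff_s23 (hL : ∀ t, 0 < t → t < 1 → L (1 - t) = - L t) (x y z w : V) :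
    ff L x z y w = - ff L x y z w := by
  unfold ff
  rw [← Lt_inv hL]
  congr 1
  simp only [cr, inv_div]

lemma ff_s12 (hL : ∀ t, 0 < t → t < 1 → L (1 - t) = - L t) (x y z w : V) :
    ff L y x z w = - ff L x y z w := by
  unfold ff
  rw [cr, cr, ← Lt_aux hL (plucker x y z w), det_swap x y]
  congr 2 <;> ring

lemma ff_s34 (hL : ∀ t, 0 < t → t < 1 → L (1 - t) = - L t) (x y z w : V) :
    ff L x y w z = - ff L x y z w := by
  unfold ff
  rw [cr, cr, ← Lt_aux hL (plucker x y z w), det_swap z w]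
  congr 2; ring

lemma ff_meas (hL : Measurable L) :
    Measurable fun p : V × V × V × V => ff L p.1 p.2.1 p.2.2.1 p.2.2.2 := by
  unfold ff cr det
  exact (Lt_meas hL).comp (by fun_prop)

end SA

namespace SA

structure Alt (f : V → V → V → V → ℝ) : Prop where
  s12 : ∀ x y z w, f y x z w = - f x y z w
  s23 : ∀ x y z w, f x z y w = - f x y z w
  s34 : ∀ x y z w, f x y w z = - f x y z w
  inv : ∀ a b c d : ℝ, a * d - b * c ≠ 0 → ∀ x y z w,
    f (lin a b c d x) (lin a b c d y) (lin a b c d z) (lin a b c d w) = f x y z w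
  hom : ∀ c : ℝ, c ≠ 0 → ∀ x y z w, f (c * x.1, c * x.2) y z w = f x y z w

namespace Alt
variable {f : V → V → V → V → ℝ} (h : Alt f)
include h

lemma d12 (x y z w v : V) : |D f y x z w v| = |D f x y z w v| := by
  rw [← abs_neg]; congr 1; unfold D
  rw [h.s12 x y w v, h.s12 x y z v, h.s12 x y z w]; ring
lemma d23 (x y z w v : V) : |D f x z y w v| = |D f x y z w v| := by
  rw [← abs_neg]; congr 1; unfold D
  rw [h.s12 y z w v, h.s23 x y z v, h.s23 x y z w]; ring
lemma d34 (x y z w v : V) : |D f x y w z v| = |D f x y z w v| := by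
  rw [← abs_neg]; congr 1; unfold D
  rw [h.s23 y z w v, h.s23 x z w v, h.s34 x y z w]; ring
lemma d45 (x y z w v : V) : |D f x y z v w| = |D f x y z w v| := by
  rw [← abs_neg]; congr 1; unfold D
  rw [h.s34 y z w v, h.s34 x z w v, h.s34 x y w v]; ring

lemma dinv (a b c d : ℝ) (hd : a * d - b * c ≠ 0) (x y z w v : V) :
    D f (lin a b c d x) (lin a b c d y) (lin a b c d z) (lin a b c d w) (lin a b c d v)
      = D f x y z w v := by
  unfold D; simp only [h.inv a b c d hd]

lemma hom2 (c : ℝ) (hc : c ≠ 0) (x y z w : V) : f x (c * y.1, c * y.2) z w = f x y z w := by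
  rw [h.s12, h.hom c hc, h.s12 x y, neg_neg]

lemma dh1 (c : ℝ) (hc : c ≠ 0) (x y z w v : V) :
    |D f (c * x.1, c * x.2) y z w v| = |D f x y z w v| := by
  unfold D; simp only [h.hom c hc]
lemma dh2 (c : ℝ) (hc : c ≠ 0) (x y z w v : V) :
    |D f x (c * y.1, c * y.2) z w v| = |D f x y z w v| := by
  rw [h.d12, h.dh1 c hc, h.d12]
lemma dh3 (c : ℝ) (hc : c ≠ 0) (x y z w v : V) :
    |D f x y (c * z.1, c * z.2) w v| = |D f x y z w v| := by
  rw [h.d23, h.dh2 c hc, h.d23]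
lemma dh4 (c : ℝ) (hc : c ≠ 0) (x y z w v : V) :
    |D f x y z (c * w.1, c * w.2) v| = |D f x y z w v| := by
  rw [h.d34, h.dh3 c hc, h.d34]
lemma dh5 (c : ℝ) (hc : c ≠ 0) (x y z w v : V) :
    |D f x y z w (c * v.1, c * v.2)| = |D f x y z w v| := by
  rw [h.d45, h.dh4 c hc, h.d45]

end Alt

def E (f : V → V → V → V → ℝ) (s t : ℝ) : ℝ := |D f (1, 0) (0, 1) (1, 1) (s, 1) (t, 1)|

section
variable {f : V → V → V → V → ℝ}

lemma E_swap (h : Alt f) (s t : ℝ) : E f t s = E f s t := h.d45 _ _ _ _ _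

lemma E_sub (h : Alt f) (s t : ℝ) : E f (1 - s) (1 - t) = E f s t := by
  unfold E
  rw [← h.dinv (-1) 1 0 1 (by norm_num) (1, 0) (0, 1) (1, 1) (s, 1) (t, 1)]
  rw [← h.dh1 (-1) (by norm_num), h.d23]
  congr 2 <;> simp [lin] <;> ring

lemma E_inv (h : Alt f) (s t : ℝ) (hs : s ≠ 0) (ht : t ≠ 0) : E f s⁻¹ t⁻¹ = E f s t := by
  unfold E
  rw [← h.dinv 0 1 1 0 (by norm_num) (1, 0) (0, 1) (1, 1) (s, 1) (t, 1)]
  rw [← h.dh4 s hs, ← h.dh5 t ht, h.d12]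
  congr 2 <;> simp [lin, hs, ht]

lemma E_T4 (h : Alt f) (s t : ℝ) (hs : s ≠ 0) : E f s⁻¹ (s⁻¹ * t + 0) = E f s t := by
  unfold E
  rw [← h.dinv s⁻¹ 0 0 1 (by simpa using hs) (1, 0) (0, 1) (1, 1) (s, 1) (t, 1)]
  rw [← h.dh1 s⁻¹ (inv_ne_zero hs), h.d34]
  congr 2 <;> simp [lin, hs]

lemma E_spread (h : Alt f) {M : ℝ} (hM : 0 ≤ M)
    (h0 : ∀ᵐ p : ℝ × ℝ, 0 < p.1 → p.1 < p.2 → p.2 < 1 → E f p.1 p.2 ≤ M) :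
    ∀ᵐ p : ℝ × ℝ, E f p.1 p.2 ≤ M := by
  have n1 : ∀ c : ℝ, ∀ᵐ p : ℝ × ℝ, p.1 ≠ c := fun c => by
    rw [Measure.volume_eq_prod]
    exact Measure.quasiMeasurePreserving_fst.ae (ae_ne c)
  have n2 : ∀ c : ℝ, ∀ᵐ p : ℝ × ℝ, p.2 ≠ c := fun c => by
    rw [Measure.volume_eq_prod]
    exact Measure.quasiMeasurePreserving_snd.ae (ae_ne c)
  have h1 : ∀ᵐ p : ℝ × ℝ, 0 < p.1 → p.1 < 1 → 0 < p.2 → p.2 < 1 → E f p.1 p.2 ≤ M := by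
    filter_upwards [h0, qmp_swap.ae h0] with p a b h1 h2 h3 h4
    rcases lt_trichotomy p.1 p.2 with h' | h' | h'
    · exact a h1 h' h4
    · have : E f p.2 p.2 = 0 := by
        unfold E
        simp only [abs_eq_zero]
        unfold D
        have s : ∀ x y z, f x y z z = 0 := fun x y z => by linarith [h.s34 x y z z]
        simp [s]
      rw [h', this]; exact hM
    · rw [← E_swap h]; exact b h3 h' h2
  have h2 : ∀ᵐ p : ℝ × ℝ, 1 < p.1 → 1 < p.2 → E f p.1 p.2 ≤ M := by
    filter_upwards [qmp_T3.ae h1] with p a h1 h2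
    rw [← E_inv h _ _ (by linarith) (by linarith)]
    exact a (inv_pos.2 (by linarith)) (inv_lt_one_of_one_lt₀ h1) (inv_pos.2 (by linarith))
      (inv_lt_one_of_one_lt₀ h2)
  have h3 : ∀ᵐ p : ℝ × ℝ, p.1 < 0 → p.2 < 0 → E f p.1 p.2 ≤ M := by
    filter_upwards [qmp_T2.ae h2] with p a h1 h2
    rw [← E_sub h]
    exact a (by linarith) (by linarith)
  have h4 : ∀ᵐ p : ℝ × ℝ, 0 < p.1 → p.1 < 1 → 1 < p.2 → E f p.1 p.2 ≤ M := by
    filter_upwards [qmp_T4.ae h2] with p a h1 h2 h3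
    rw [← E_T4 h _ _ h1.ne']
    refine a (one_lt_inv_iff₀.2 ⟨h1, h2⟩) ?_
    simp only [add_zero]
    rw [← div_eq_inv_mul, lt_div_iff₀ h1]; linarith
  have h5 : ∀ᵐ p : ℝ × ℝ, p.1 < 0 → 1 < p.2 → E f p.1 p.2 ≤ M := by
    filter_upwards [qmp_T4.ae h3] with p a h1 h2
    rw [← E_T4 h _ _ h1.ne]
    refine a (inv_lt_zero.2 h1) ?_
    simp only [add_zero]
    exact mul_neg_of_neg_of_pos (inv_lt_zero.2 h1) (by linarith)
  have h6 : ∀ᵐ p : ℝ × ℝ, 1 < p.1 → 0 < p.2 → p.2 < 1 → E f p.1 p.2 ≤ M := by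
    filter_upwards [qmp_swap.ae h4] with p a h1 h2 h3
    rw [← E_swap h]; exact a h2 h3 h1
  have h7 : ∀ᵐ p : ℝ × ℝ, p.1 < 0 → 0 < p.2 → p.2 < 1 → E f p.1 p.2 ≤ M := by
    filter_upwards [qmp_T2.ae h6] with p a h1 h2 h3
    rw [← E_sub h]
    exact a (by linarith) (by linarith) (by linarith)
  have h8 : ∀ᵐ p : ℝ × ℝ, 1 < p.1 → p.2 < 0 → E f p.1 p.2 ≤ M := by
    filter_upwards [qmp_swap.ae h5] with p a h1 h2
    rw [← E_swap h]; exact a h2 h1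
  have h9 : ∀ᵐ p : ℝ × ℝ, 0 < p.1 → p.1 < 1 → p.2 < 0 → E f p.1 p.2 ≤ M := by
    filter_upwards [qmp_swap.ae h7] with p a h1 h2 h3
    rw [← E_swap h]; exact a h3 h1 h2
  filter_upwards [h1, h2, h3, h4, h5, h6, h7, h8, h9, n1 0, n1 1, n2 0, n2 1] with p
    h1 h2 h3 h4 h5 h6 h7 h8 h9 n1 n2 n3 n4
  rcases lt_or_gt_of_ne n1 with a | a
  · rcases lt_or_gt_of_ne n3 with b | b
    · exact h3 a b
    · rcases lt_or_gt_of_ne n4 with c | c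
      · exact h7 a b c
      · exact h5 a c
  rcases lt_or_gt_of_ne n2 with a' | a'
  · rcases lt_or_gt_of_ne n3 with b | b
    · exact h9 a a' b
    · rcases lt_or_gt_of_ne n4 with c | c
      · exact h1 a a' b c
      · exact h4 a a' c
  · rcases lt_or_gt_of_ne n3 with b | b
    · exact h8 a' b
    · rcases lt_or_gt_of_ne n4 with c | c
      · exact h6 a' b c
      · exact h2 a' c

end

noncomputable def pent (L : ℝ → ℝ) (p : ℝ × ℝ) : ℝ :=
  L p.1 - L p.2 - L (p.1 / p.2) - L ((p.2 - 1) / (p.1 - 1))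
      + L (p.1 * (p.2 - 1) / (p.2 * (p.1 - 1)))

lemma ff_alt {L : ℝ → ℝ} (hL : ∀ t, 0 < t → t < 1 → L (1 - t) = - L t) : Alt (ff L) where
  s12 := ff_s12 hL
  s23 := ff_s23 hL
  s34 := ff_s34 hL
  inv a b c d h x y z w := by unfold ff; rw [cr_inv a b c d h]
  hom c h x y z w := by unfold ff; rw [cr_hom c h]

lemma args {x y : ℝ} (h0 : 0 < x) (h1 : x < y) (h2 : y < 1) :
    (0 < x / y ∧ x / y < 1) ∧ (0 < (y - 1) / (x - 1) ∧ (y - 1) / (x - 1) < 1) ∧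
    (0 < x * (y - 1) / (y * (x - 1)) ∧ x * (y - 1) / (y * (x - 1)) < 1) := by
  have hy : 0 < y := h0.trans h1
  refine ⟨⟨by positivity, (div_lt_one hy).2 h1⟩,
    ⟨div_pos_of_neg_of_neg (by linarith) (by linarith), ?_⟩,
    div_pos_of_neg_of_neg (mul_neg_of_pos_of_neg h0 (by linarith))
      (mul_neg_of_pos_of_neg hy (by linarith)), ?_⟩
  · rw [div_lt_one_of_neg (by linarith)]; linarith
  · rw [div_lt_one_of_neg (mul_neg_of_pos_of_neg hy (by linarith))]; nlinarith

lemma E_pent {L : ℝ → ℝ} (hL : ∀ t, 0 < t → t < 1 → L (1 - t) = - L t) {x y : ℝ}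
    (h0 : 0 < x) (h1 : x < y) (h2 : y < 1) : E (ff L) x y = |pent L (x, y)| := by
  have hy : 0 < y := h0.trans h1
  obtain ⟨a1, a2, a3⟩ := args h0 h1 h2
  unfold E
  rw [(ff_alt hL).d34, (ff_alt hL).d45]
  congr 1
  unfold D pent ff
  have e1 : cr (0, 1) (x, 1) (y, 1) (1, 1) = x * (y - 1) / (y * (x - 1)) := by
    simp [cr, det]
  have e2 : cr (1, 0) (x, 1) (y, 1) (1, 1) = (y - 1) / (x - 1) := by
    simp [cr, det]
  have e3 : cr (1, 0) (0, 1) (y, 1) (1, 1) = 1 - y := by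
    simp [cr, det, div_neg]
  have e4 : cr (1, 0) (0, 1) (x, 1) (1, 1) = 1 - x := by
    simp [cr, det, div_neg]
  have e5 : cr (1, 0) (0, 1) (x, 1) (y, 1) = 1 - x / y := by
    simp [cr, det]; field_simp; ring
  rw [e1, e2, e3, e4, e5, Lt_sub hL, Lt_sub hL, Lt_sub hL, Lt_mid a1.1 a1.2, Lt_mid a2.1 a2.2,
    Lt_mid a3.1 a3.2, Lt_mid h0 (h1.trans h2), Lt_mid hy h2]
  ring

end SA

namespace SA
section
variable {f : V → V → V → V → ℝ}

def G (x y z : V) : V → V :=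
  lin (y.2 * det x z) (-(y.1 * det x z)) (-(x.2 * det z y)) (x.1 * det z y)

lemma G_det (x y z : V) : (y.2 * det x z) * (x.1 * det z y) - -(y.1 * det x z) * -(x.2 * det z y)
    = det x z * det z y * det x y := by
  simp only [det]; ring

lemma G_apply (x y z v : V) : G x y z v = (det v y * det x z, det x v * det z y) := by
  simp only [G, lin, det]; ext <;> simp only <;> ring

lemma det_self (x : V) : det x x = 0 := by simp only [det]; ring

lemma D_norm (h : Alt f) {x y z w v : V} (hxy : det x y ≠ 0) (hxz : det x z ≠ 0)
    (hyz : det y z ≠ 0) (hw : det x w ≠ 0) (hv : det x v ≠ 0) :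
    |D f x y z w v| = E f ((G x y z w).1 / (G x y z w).2) ((G x y z v).1 / (G x y z v).2) := by
  have hzy : det z y ≠ 0 := by rw [det_swap]; simpa using hyz
  rw [← h.dinv (y.2 * det x z) (-(y.1 * det x z)) (-(x.2 * det z y)) (x.1 * det z y)
    (by rw [G_det]; simp [hxy, hxz, hzy])]
  change |D f (G x y z x) (G x y z y) (G x y z z) (G x y z w) (G x y z v)| = _
  simp only [G_apply, det_self, zero_mul]
  unfold E
  symm
  rw [← h.dh1 (det x y * det x z) (by simp [hxy, hxz]),
    ← h.dh2 (det x y * det z y) (by simp [hxy, hzy]),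
    ← h.dh3 (det z y * det x z) (by simp [hxz, hzy]),
    ← h.dh4 (det x w * det z y) (by simp [hw, hzy]),
    ← h.dh5 (det x v * det z y) (by simp [hv, hzy])]
  congr 2 <;> ext <;> simp only <;> field_simp <;> ring_nf

lemma ne_zero_sq {x y : V} (h : det x y ≠ 0) : x.1 ^ 2 + x.2 ^ 2 ≠ 0 := by
  intro h0
  have h1 : x.1 = 0 := by nlinarith [sq_nonneg x.1, sq_nonneg x.2]
  have h2 : x.2 = 0 := by nlinarith [sq_nonneg x.1, sq_nonneg x.2]
  apply h; simp [det, h1, h2]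

lemma ae_det {x : V} (h : x.1 ^ 2 + x.2 ^ 2 ≠ 0) : ∀ᵐ v : V, det x v ≠ 0 := by
  have h1 := lin_qmp x.1 x.2 (-x.2) x.1 (by convert h using 1; ring)
  have h2 : Measure.QuasiMeasurePreserving (Prod.snd : ℝ × ℝ → ℝ) volume volume := by
    rw [Measure.volume_eq_prod]
    exact Measure.quasiMeasurePreserving_snd
  filter_upwards [(h2.comp h1).ae (ae_ne 0)] with v hv
  intro h0; apply hv
  simp only [Function.comp, lin]
  simp only [det] at h0; linarith

lemma G_qmp {x y z : V} (hxy : det x y ≠ 0) (hxz : det x z ≠ 0)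
    (hyz : det y z ≠ 0) :
    Measure.QuasiMeasurePreserving (fun v => (G x y z v).1 / (G x y z v).2) volume volume := by
  have hzy : det z y ≠ 0 := by rw [det_swap]; simpa using hyz
  exact qmp_div.comp (lin_qmp _ _ _ _ (by rw [G_det]; simp [hxy, hxz, hzy]))

lemma H3 (h : Alt f) {M : ℝ} (hE : ∀ᵐ p : ℝ × ℝ, E f p.1 p.2 ≤ M) (x y z : V)
    (hxy : det x y ≠ 0) (hxz : det x z ≠ 0) (hyz : det y z ≠ 0) :
    ∀ᵐ p : V × V, |D f x y z p.1 p.2| ≤ M := by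
  have q := G_qmp hxy hxz hyz
  have qq : Measure.QuasiMeasurePreserving (fun p : V × V => ((G x y z p.1).1 / (G x y z p.1).2,
      (G x y z p.2).1 / (G x y z p.2).2)) volume volume := by
    rw [Measure.volume_eq_prod, Measure.volume_eq_prod]
    exact QuasiMeasurePreserving.prodMap q q
  have n1 : ∀ᵐ p : V × V, det x p.1 ≠ 0 := by
    rw [Measure.volume_eq_prod]
    exact Measure.quasiMeasurePreserving_fst.ae (ae_det (ne_zero_sq hxy))
  have n2 : ∀ᵐ p : V × V, det x p.2 ≠ 0 := by
    rw [Measure.volume_eq_prod]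
    exact Measure.quasiMeasurePreserving_snd.ae (ae_det (ne_zero_sq hxy))
  filter_upwards [qq.ae hE, n1, n2] with p h1 h2 h3
  rw [D_norm h hxy hxz hyz h2 h3]
  exact h1

lemma H2 (h : Alt f) (hm : Measurable fun p : V × V × V × V => f p.1 p.2.1 p.2.2.1 p.2.2.2)
    {M : ℝ} (hE : ∀ᵐ p : ℝ × ℝ, E f p.1 p.2 ≤ M) (x y : V)
    (hxy : det x y ≠ 0) :
    ∀ᵐ p : V × (V × V), |D f x y p.1 p.2.1 p.2.2| ≤ M := by
  have hmm : ∀ a b c d : V × V × V → V, Measurable a → Measurable b → Measurable c → Measurable d →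
      Measurable fun p => f (a p) (b p) (c p) (d p) := fun a b c d ha hb hc hd =>
    hm.comp (ha.prodMk (hb.prodMk (hc.prodMk hd)))
  have hD : Measurable fun p : V × (V × V) => D f x y p.1 p.2.1 p.2.2 := by
    unfold D
    refine ((((hmm _ _ _ _ ?_ ?_ ?_ ?_).sub (hmm _ _ _ _ ?_ ?_ ?_ ?_)).add
      (hmm _ _ _ _ ?_ ?_ ?_ ?_)).sub (hmm _ _ _ _ ?_ ?_ ?_ ?_)).add (hmm _ _ _ _ ?_ ?_ ?_ ?_)
      <;> fun_prop
  rw [Measure.volume_eq_prod, Measure.ae_prod_iff_ae_ae]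
  · have hyx : det y x ≠ 0 := by rw [det_swap]; simpa using hxy
    filter_upwards [ae_det (ne_zero_sq hxy), ae_det (ne_zero_sq hyx)] with z h1 h2
    exact H3 h hE x y z hxy h1 h2
  · exact measurableSet_le (by fun_prop) (by fun_prop)

lemma H4 (h : Alt f) {M : ℝ} (hE : ∀ᵐ p : ℝ × ℝ, E f p.1 p.2 ≤ M) :
    ∀ᵐ l : ℝ, ∀ x y z w : V, det x y ≠ 0 → det x z ≠ 0 → det y z ≠ 0 → det x w ≠ 0 →
      det y w ≠ 0 → cr x y z w = l → ∀ᵐ v : V, |D f x y z w v| ≤ M := by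
  rw [Measure.volume_eq_prod] at hE
  have h1 := Measure.ae_ae_of_ae_prod hE
  filter_upwards [((qmp_inv).comp (qmp_affine (-1) 1 (by norm_num))).ae h1] with l hl
  intro x y z w hxy hxz hyz hxw hyw hl2
  have q := G_qmp hxy hxz hyz
  filter_upwards [q.ae hl, ae_det (ne_zero_sq hxy)] with v hv h3
  rw [D_norm h hxy hxz hyz hxw h3]
  convert hv using 2
  simp only [Function.comp, G_apply]
  have pl := plucker x y z w
  have : -1 * l + 1 = det x w * det y z / (det x z * det y w) := by
    rw [← hl2, cr]; field_simp; linarith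
  rw [this, det_swap y w, det_swap y z]
  field_simp

end
end SA

namespace SA

lemma ff_good {L : ℝ → ℝ} {S M : ℝ} (hm : Measurable L)
    (hL : ∀ t, 0 < t → t < 1 → L (1 - t) = - L t) (hb : ∀ t, |L t| ≤ S)
    (hE : ∀ᵐ p : ℝ × ℝ, E (ff L) p.1 p.2 ≤ M) : Good (ff L) S M where
  meas := ff_meas hm
  bdd x y z w := Lt_bdd hb _
  s12 := ff_s12 hL
  s23 := ff_s23 hL
  s34 := ff_s34 hL
  inv := (ff_alt hL).inv
  hom := (ff_alt hL).hom
  H2 := H2 (ff_alt hL) (ff_meas hm) hE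
  H3 := H3 (ff_alt hL) hE

lemma exists_k {l : ℝ} (h0 : 0 < l) (h1 : l ≤ 1 / 2) :
    ∃ k : ℝ, 0 < k ∧ k < 1 ∧ |Real.log k| ≤ 1 / 2 ∧ (1 - k ^ 2) ^ 2 = l * (1 - k ^ 2 + k ^ 4) := by
  obtain ⟨q, hq, hq2⟩ : ∃ q : ℝ, 0 < q ∧ q ^ 2 = l / (1 - l) := by
    have : 0 < l / (1 - l) := div_pos h0 (by linarith)
    exact ⟨√(l / (1 - l)), Real.sqrt_pos.2 this, Real.sq_sqrt this.le⟩
  have hl1 : 0 < 1 - l := by linarith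
  have hq3 : q ^ 2 * (1 - l) = l := by rw [hq2]; field_simp
  have hq1 : q ≤ 1 := by
    have : q ^ 2 ≤ 1 := by rw [hq2, div_le_one hl1]; linarith
    nlinarith
  obtain ⟨r, hr, hr2⟩ : ∃ r : ℝ, 0 < r ∧ r ^ 2 = q ^ 2 + 4 :=
    ⟨√(q ^ 2 + 4), by positivity, Real.sq_sqrt (by positivity)⟩
  have hqr : q < r := by nlinarith
  have hrq : r < q + 2 := by nlinarith
  set k := (r - q) / 2 with hk
  have hk0 : 0 < k := by linarith
  have hk1 : k < 1 := by linarith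
  have hkq : k ^ 2 + q * k = 1 := by rw [hk]; nlinarith
  refine ⟨k, hk0, hk1, ?_, ?_⟩
  · rw [abs_of_neg (Real.log_neg hk0 hk1), neg_le, ← Real.exp_le_exp, Real.exp_log hk0, Real.exp_neg]
    have h2 := Real.quadratic_le_exp_of_nonneg (x := 1 / 2) (by norm_num)
    have h3 : (Real.exp (1 / 2))⁻¹ ≤ (13 / 8 : ℝ)⁻¹ := by
      apply inv_anti₀ (by norm_num); norm_num at h2 ⊢; linarith
    refine h3.trans ?_
    by_contra hc
    push Not at hc
    norm_num at hc
    nlinarith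
  · have e : 1 - k ^ 2 = q * k := by linarith
    have e2 : 1 - k ^ 2 + k ^ 4 = (q * k) ^ 2 + k ^ 2 := by rw [← e]; ring
    rw [e2, e]
    have : (q * k) ^ 2 - l * ((q * k) ^ 2 + k ^ 2) = k ^ 2 * (q ^ 2 * (1 - l) - l) := by ring
    rw [hq3] at this
    linarith

lemma core {L : ℝ → ℝ} {S M : ℝ} (hM : 0 ≤ M) (hm : Measurable L)
    (hL : ∀ t, 0 < t → t < 1 → L (1 - t) = - L t) (hb : ∀ t, |L t| ≤ S)
    (hp : ∀ᵐ p : ℝ × ℝ, 0 < p.1 → p.1 < p.2 → p.2 < 1 → |pent L p| ≤ M) :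
    ∀ᵐ t : ℝ, 0 < t → t < 1 → |L t| ≤ 9 * M := by
  have hE : ∀ᵐ p : ℝ × ℝ, E (ff L) p.1 p.2 ≤ M := by
    refine E_spread (ff_alt hL) hM ?_
    filter_upwards [hp] with p h h1 h2 h3
    rw [E_pent hL h1 h2 h3]
    exact h h1 h2 h3
  have hg := ff_good hm hL hb hE
  have half : ∀ᵐ t : ℝ, 0 < t → t ≤ 1 / 2 → |L t| ≤ 9 * M := by
    filter_upwards [H4 (ff_alt hL) hE] with l h h0 h1
    obtain ⟨k, hk0, hk1, hk2, hk3⟩ := exists_k h0 h1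
    have k4 : k ^ 4 < 1 := pow_lt_one₀ hk0.le hk1 (by norm_num)
    have d01 : det (1, k) (k ^ 3, 1) = 1 - k ^ 4 := by simp only [det]; ring
    have d02 : det (1, k) (-k, 1) = 1 + k ^ 2 := by simp only [det]; ring
    have d12 : det (k ^ 3, 1) (-k, 1) = k ^ 3 + k := by simp only [det]; ring
    have d03 : det (1, k) (-1, k ^ 3) = k ^ 3 + k := by simp only [det]; ring
    have d13 : det (k ^ 3, 1) (-1, k ^ 3) = 1 + k ^ 6 := by simp only [det]; ring
    have d23 : det (-k, 1) (-1, k ^ 3) = 1 - k ^ 4 := by simp only [det]; ring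
    have hcr : cr (1, k) (k ^ 3, 1) (-k, 1) (-1, k ^ 3) = l := by
      rw [cr, d01, d02, d13, d23, div_eq_iff (by positivity)]
      have : (1 - k ^ 4) * (1 - k ^ 4) = (1 - k ^ 2) ^ 2 * (1 + k ^ 2) ^ 2 := by ring
      rw [this, hk3]; ring
    have hD := h (1, k) (k ^ 3, 1) (-k, 1) (-1, k ^ 3) (by rw [d01]; linarith)
      (by rw [d02]; positivity) (by rw [d12]; positivity) (by rw [d03]; positivity)
      (by rw [d13]; positivity) hcr
    have r := rect hg k hk0 hk1 hD
    unfold ff at r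
    rw [hcr, Lt_mid h0 (by linarith)] at r
    nlinarith
  have q := qmp_affine (-1) 1 (by norm_num)
  filter_upwards [half, q.ae half] with t h1 h2 h3 h4
  rcases le_total t (1 / 2) with h | h
  · exact h1 h3 h
  · have := h2 (by linarith) (by linarith)
    rw [show -1 * t + 1 = 1 - t by ring, hL t h3 h4, abs_neg] at this
    exact this

end SA

namespace SA

lemma ae_args {Q : ℝ → Prop} (hQ : ∀ᵐ t : ℝ, Q t) :
    ∀ᵐ p : ℝ × ℝ, 0 < p.1 → p.1 < p.2 → p.2 < 1 →
      Q p.1 ∧ Q p.2 ∧ Q (p.1 / p.2) ∧ Q ((p.2 - 1) / (p.1 - 1)) ∧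
      Q (p.1 * (p.2 - 1) / (p.2 * (p.1 - 1))) := by
  have n1 : ∀ᵐ p : ℝ × ℝ, Q p.1 := by
    rw [Measure.volume_eq_prod]
    exact Measure.quasiMeasurePreserving_fst.ae hQ
  have n2 : ∀ᵐ p : ℝ × ℝ, Q p.2 := by
    rw [Measure.volume_eq_prod]
    exact Measure.quasiMeasurePreserving_snd.ae hQ
  have n3 := qmp_div.ae hQ
  have n4 := (qmp_div.comp (qmp_swap.comp qmp_T2)).ae hQ
  have ps := ((qmp_affine 1 1 (by norm_num)).comp qmp_inv).comp (qmp_affine 1 (-1) (by norm_num))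
  have n5 := (qmp_div.comp (qmp_skew (φ := fun _ => _) ((ps.measurable.comp measurable_fst).prodMk
    (ps.measurable.comp measurable_snd)) ps (Filter.Eventually.of_forall fun _ => ps))).ae hQ
  filter_upwards [n1, n2, n3, n4, n5] with p h1 h2 h3 h4 h5 a b c
  refine ⟨h1, h2, h3, ?_, ?_⟩
  · convert h4 using 1
    simp only [Function.comp, Prod.swap]
    rw [← neg_div_neg_eq]; ring_nf
  · convert h5 using 1
    simp only [Function.comp]
    have e1 : p.1 - 1 ≠ 0 := by linarith
    have e2 : p.2 - 1 ≠ 0 := by linarith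
    have e3 : p.2 ≠ 0 := by linarith
    have e (t : ℝ) (h : t - 1 ≠ 0) : 1 * (1 * t + -1)⁻¹ + 1 = t / (t - 1) := by
      rw [show 1 * t + -1 = t - 1 by ring]; field_simp; ring
    rw [e _ e1, e _ e2]
    field_simp

lemma exists_of_ae {P : ℝ → Prop} (h : ∀ᵐ t : ℝ, P t) {a b : ℝ} (hab : a < b) :
    ∃ t, a < t ∧ t < b ∧ P t := by
  by_contra hc
  push Not at hc
  have : volume (Ioo a b) = 0 := by
    refine measure_mono_null ?_ (ae_iff.1 h)
    intro t ht
    exact hc t ht.1 ht.2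
  rw [Real.volume_Ioo] at this
  simp at this; linarith

/-- chain step -/
lemma chain_step {L : ℝ → ℝ} {M B s a : ℝ} (ha : 0 < a)
    (hp : ∀ᵐ p : ℝ × ℝ, 0 < p.1 → p.1 < p.2 → p.2 < 1 → |pent L p| ≤ M)
    (hB : ∀ᵐ t : ℝ, 1 / 12 ≤ t → t ≤ 11 / 12 → |L t| ≤ B)
    (hs : ∀ᵐ t : ℝ, a * (3 / 2) ≤ t → t ≤ 1 / 2 → |L t| ≤ s)
    (h1 : B ≤ s) (h2 : 6 * B + 3 * M ≤ s) :
    ∀ᵐ t : ℝ, a ≤ t → t ≤ 1 / 2 → |L t| ≤ s := by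
  have hQ := ae_args (hB.and hs)
  have h := hp.and hQ
  rw [Measure.volume_eq_prod] at h
  filter_upwards [Measure.ae_ae_of_ae_prod h, hB] with x hx hBx hax hx2
  by_cases hx12 : 1 / 12 ≤ x
  · exact (hBx hx12 (by linarith)).trans h1
  push Not at hx12
  have hx1 : 0 < 1 - x := by linarith
  have hx0 : 0 < x := by linarith
  set A : ℝ → ℝ := fun e => (1 - x)⁻¹ * e + -(1 - x)⁻¹ with hA
  have qA := qmp_affine ((1 - x)⁻¹) (-(1 - x)⁻¹) (inv_ne_zero hx1.ne')
  have g0 := qmp_inv.ae hx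
  have g1 := qA.ae g0
  have g2 := qA.ae g1
  obtain ⟨e, he1, he2, ⟨p0, q0⟩, ⟨p1, q1⟩, ⟨p2, q2⟩⟩ :=
    exists_of_ae (g0.and (g1.and g2)) (a := 9 / 2) (b := 5) (by norm_num)
  have step : ∀ e : ℝ, 5 / 2 < e → e < 5 →
      (0 < x → x < e⁻¹ → e⁻¹ < 1 → |pent L (x, e⁻¹)| ≤ M) →
      (0 < x → x < e⁻¹ → e⁻¹ < 1 →
        (((1 / 12 ≤ x → x ≤ 11 / 12 → |L x| ≤ B) ∧ (a * (3 / 2) ≤ x → x ≤ 1 / 2 → |L x| ≤ s)) ∧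
        ((1 / 12 ≤ e⁻¹ → e⁻¹ ≤ 11 / 12 → |L e⁻¹| ≤ B) ∧
          (a * (3 / 2) ≤ e⁻¹ → e⁻¹ ≤ 1 / 2 → |L e⁻¹| ≤ s)) ∧
        ((1 / 12 ≤ x / e⁻¹ → x / e⁻¹ ≤ 11 / 12 → |L (x / e⁻¹)| ≤ B) ∧
          (a * (3 / 2) ≤ x / e⁻¹ → x / e⁻¹ ≤ 1 / 2 → |L (x / e⁻¹)| ≤ s)) ∧
        ((1 / 12 ≤ (e⁻¹ - 1) / (x - 1) → (e⁻¹ - 1) / (x - 1) ≤ 11 / 12 →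
            |L ((e⁻¹ - 1) / (x - 1))| ≤ B) ∧
          (a * (3 / 2) ≤ (e⁻¹ - 1) / (x - 1) → (e⁻¹ - 1) / (x - 1) ≤ 1 / 2 →
            |L ((e⁻¹ - 1) / (x - 1))| ≤ s)) ∧
        ((1 / 12 ≤ x * (e⁻¹ - 1) / (e⁻¹ * (x - 1)) → x * (e⁻¹ - 1) / (e⁻¹ * (x - 1)) ≤ 11 / 12 →
            |L (x * (e⁻¹ - 1) / (e⁻¹ * (x - 1)))| ≤ B) ∧
          (a * (3 / 2) ≤ x * (e⁻¹ - 1) / (e⁻¹ * (x - 1)) →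
            x * (e⁻¹ - 1) / (e⁻¹ * (x - 1)) ≤ 1 / 2 →
            |L (x * (e⁻¹ - 1) / (e⁻¹ * (x - 1)))| ≤ s)))) →
      |L x - L (x * e) + L (x * A e)| ≤ M + 2 * B ∧ |L (x * e)| ≤ s ∧ |L (x * A e)| ≤ s ∧
        e - 1 < A e ∧ A e < 12 / 11 * (e - 1) := by
    intro e he1 he2 p q
    have e0 : 0 < e := by linarith
    have i1 : 1 / 5 < e⁻¹ := by rw [← one_div]; exact one_div_lt_one_div_of_lt e0 he2
    have i2 : e⁻¹ < 2 / 5 := by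
      have := one_div_lt_one_div_of_lt (by norm_num) he1
      rw [one_div] at this; norm_num at this; exact this
    have xa : x / e⁻¹ = x * e := by field_simp
    have xA : A e = (e - 1) / (1 - x) := by rw [hA]; field_simp; ring
    have xb : x * (e⁻¹ - 1) / (e⁻¹ * (x - 1)) = x * A e := by
      have : x - 1 ≠ 0 := by linarith
      rw [xA, div_eq_iff (by simp [e0.ne', this])]
      field_simp; ring
    have A1 : e - 1 < A e := by rw [xA, lt_div_iff₀ hx1]; nlinarith
    have A2 : A e < 12 / 11 * (e - 1) := by rw [xA, div_lt_iff₀ hx1]; nlinarith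
    have m : ∀ u : ℝ, 3 / 2 < u → x * (3 / 2) ≤ x * u := fun u hu =>
      mul_le_mul_of_nonneg_left hu.le hx0.le
    have m' : ∀ u : ℝ, u < 5 → x * u ≤ x * 5 := fun u hu =>
      mul_le_mul_of_nonneg_left hu.le hx0.le
    have p' := p hx0 (by linarith) (by linarith)
    obtain ⟨-, q2, q3, q4, q5⟩ := q hx0 (by linarith) (by linarith)
    rw [xa] at q3
    rw [xb] at q5
    unfold pent at p'
    simp only at p'
    rw [xa, xb] at p'
    have b2 := q2.1 (by linarith) (by linarith)
    have b4 := q4.1 (by rw [le_div_iff_of_neg (by linarith)]; linarith)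
      (by rw [div_le_iff_of_neg (by linarith)]; linarith)
    refine ⟨?_, q3.2 (by linarith [m e (by linarith)]) (by linarith [m' e he2]),
      q5.2 (by linarith [m (A e) (by linarith)]) (by linarith [m' (A e) (by linarith)]), A1, A2⟩
    rw [abs_le] at *
    constructor <;> linarith [p'.1, p'.2, b2.1, b2.2, b4.1, b4.2]
  obtain ⟨r0, s0, -, t0, u0⟩ := step e (by linarith) he2 p0 q0
  obtain ⟨r1, -, -, t1, u1⟩ := step (A e) (by linarith) (by linarith) p1 q1
  obtain ⟨r2, -, s2, t2, u2⟩ := step (A (A e)) (by linarith) (by linarith) p2 q2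
  rw [abs_le] at *
  constructor <;> linarith [r0.1, r0.2, r1.1, r1.2, r2.1, r2.2, s0.1, s0.2, s2.1, s2.2]

end SA

namespace SA

lemma small_bad {L : ℝ → ℝ} (hm : Measurable L) {δ : ENNReal} (hδ : 0 < δ) :
    ∃ K : ℝ, 0 ≤ K ∧ volume (Ioo (0:ℝ) 1 ∩ {t | K < |L t|}) < δ := by
  have hmeas : ∀ n : ℕ, MeasurableSet (Ioo (0:ℝ) 1 ∩ {t | (n:ℝ) < |L t|}) := fun n =>
    measurableSet_Ioo.inter (measurableSet_lt (by fun_prop) (by fun_prop))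
  have h := tendsto_measure_iInter_atTop (μ := volume)
    (s := fun n : ℕ => Ioo (0:ℝ) 1 ∩ {t | (n:ℝ) < |L t|})
    (fun n => (hmeas n).nullMeasurableSet) (fun m n hmn t ht => ⟨ht.1, by
      have : (m:ℝ) ≤ n := by exact_mod_cast hmn
      exact lt_of_le_of_lt this ht.2⟩)
    ⟨0, ((measure_mono inter_subset_left).trans_lt (by simp)).ne⟩
  have he : (⋂ n : ℕ, Ioo (0:ℝ) 1 ∩ {t | (n:ℝ) < |L t|}) = ∅ := by
    ext t
    simp only [mem_iInter, mem_empty_iff_false, iff_false, not_forall]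
    obtain ⟨n, hn⟩ := exists_nat_gt |L t|
    exact ⟨n, fun h => absurd h.2 (not_lt.2 hn.le)⟩
  rw [he, measure_empty] at h
  obtain ⟨n, hn⟩ := (h.eventually_lt_const hδ).exists
  exact ⟨n, Nat.cast_nonneg n, hn⟩

lemma local_bound {L : ℝ → ℝ} {M ε : ℝ} (hm : Measurable L) (hε : 0 < ε) (hε1 : ε ≤ 1 / 2)
    (hp : ∀ᵐ p : ℝ × ℝ, 0 < p.1 → p.1 < p.2 → p.2 < 1 → |pent L p| ≤ M) :
    ∃ s : ℝ, 0 ≤ s ∧ ∀ᵐ t : ℝ, ε ≤ t → t ≤ 1 / 2 → |L t| ≤ s := by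
  obtain ⟨K, hK, hbad⟩ := small_bad hm (δ := ENNReal.ofReal (ε / 16)) (by simpa using hε)
  set N := Ioo (0:ℝ) 1 ∩ {t | K < |L t|} with hN
  have hNm : MeasurableSet N :=
    measurableSet_Ioo.inter (measurableSet_lt (by fun_prop) (by fun_prop))
  have hout : ∀ t, 0 < t → t < 1 → t ∉ N → |L t| ≤ K := fun t h0 h1 h => by
    by_contra hc
    exact h ⟨⟨h0, h1⟩, not_le.1 hc⟩
  refine ⟨4 * K + |M|, by positivity, ?_⟩
  have h := hp
  rw [Measure.volume_eq_prod] at h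
  filter_upwards [Measure.ae_ae_of_ae_prod h] with x hx hx1 hx2
  have x0 : 0 < x := by linarith
  -- pulled back bad sets are small
  have small : ∀ φ φ' : ℝ → ℝ, Measurable φ → (∀ y ∈ Ioo x 1, HasDerivAt φ (φ' y) y) →
      InjOn φ (Ioo x 1) → (∀ y ∈ Ioo x 1, ε ≤ |φ' y|) →
      volume (Ioo x 1 ∩ φ ⁻¹' N) ≤ ENNReal.ofReal (1 / 16) := by
    intro φ φ' h1 h2 h3 h4
    have := (pull_quant h1 measurableSet_Ioo hNm h2 h3 ε h4).trans hbad.le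
    rw [show ε / 16 = ε * (1 / 16) by ring, ENNReal.ofReal_mul hε.le] at this
    exact (ENNReal.mul_le_mul_iff_right (by simpa using hε) ENNReal.ofReal_ne_top).1 this
  have s1 := small (fun y => y) (fun _ => 1) (by fun_prop) (fun y _ => hasDerivAt_id y)
    (fun a _ b _ h => h) (fun y _ => by simp; linarith)
  have s2 := small (fun y => x / y) (fun y => x * -(y ^ 2)⁻¹) (by fun_prop)
    (fun y hy => by
      have y0 : y ≠ 0 := by linarith [hy.1]
      simpa [div_eq_mul_inv] using (hasDerivAt_inv y0).const_mul x)
    (fun a ha b hb h => by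
      have a0 : 0 < a := by linarith [ha.1]
      have b0 : 0 < b := by linarith [hb.1]
      field_simp at h; linarith)
    (fun y hy => by
      have y0 : 0 < y := by linarith [hy.1]
      rw [abs_mul, abs_neg, abs_of_pos x0, abs_of_pos (by positivity)]
      have : 1 ≤ (y ^ 2)⁻¹ := (one_le_inv₀ (by positivity)).2 (by nlinarith [hy.2])
      nlinarith)
  have s3 := small (fun y => (y - 1) / (x - 1)) (fun y => 1 / (x - 1)) (by fun_prop)
    (fun y hy => ((hasDerivAt_id y).sub_const 1).div_const (x - 1))
    (fun a ha b hb h => by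
      have : x - 1 ≠ 0 := by linarith
      simp only at h
      field_simp at h; linarith)
    (fun y hy => by
      rw [abs_div, abs_one, abs_of_neg (by linarith), le_div_iff₀ (by linarith)]; nlinarith)
  have s4 := small (fun y => x * (y - 1) / (y * (x - 1))) (fun y => x / (x - 1) * (y ^ 2)⁻¹)
    (by fun_prop)
    (fun y hy => by
      have y0 : y ≠ 0 := by linarith [hy.1]
      have x1 : x - 1 ≠ 0 := by linarith
      have := ((((hasDerivAt_id y).sub_const 1).const_mul x)).div
        ((hasDerivAt_id y).mul_const (x - 1)) (by simp [y0, x1])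
      refine HasDerivAt.congr_deriv this ?_
      simp only [id]
      field_simp
      ring)
    (fun a ha b hb h => by
      have a0 : 0 < a := by linarith [ha.1]
      have b0 : 0 < b := by linarith [hb.1]
      have : x - 1 ≠ 0 := by linarith
      simp only at h
      field_simp at h; linarith)
    (fun y hy => by
      have y0 : 0 < y := by linarith [hy.1]
      rw [abs_mul, abs_div, abs_of_pos x0, abs_of_neg (show x - 1 < 0 by linarith),
        abs_of_pos (show 0 < (y ^ 2)⁻¹ by positivity)]
      have : 1 ≤ (y ^ 2)⁻¹ := (one_le_inv₀ (by positivity)).2 (by nlinarith [hy.2])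
      have h3 : x ≤ x / -(x - 1) := by rw [le_div_iff₀ (by linarith)]; nlinarith
      nlinarith)
  obtain ⟨y, hy1, hy2, hy3⟩ : ∃ y ∈ Ioo x 1, (|pent L (x, y)| ≤ M) ∧
      (y ∉ N ∧ x / y ∉ N ∧ (y - 1) / (x - 1) ∉ N ∧ x * (y - 1) / (y * (x - 1)) ∉ N) := by
    by_contra hc
    push Not at hc
    have hsub : Ioo x 1 ⊆ ((((Ioo x 1 ∩ (fun y => y) ⁻¹' N) ∪ (Ioo x 1 ∩ (fun y => x / y) ⁻¹' N)) ∪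
        (Ioo x 1 ∩ (fun y => (y - 1) / (x - 1)) ⁻¹' N)) ∪
        (Ioo x 1 ∩ (fun y => x * (y - 1) / (y * (x - 1))) ⁻¹' N)) ∪
        {y | ¬ (0 < x → x < y → y < 1 → |pent L (x, y)| ≤ M)} := by
      intro y hy
      by_cases h5 : (0 < x → x < y → y < 1 → |pent L (x, y)| ≤ M)
      · left
        have h6 := hc y hy (h5 x0 hy.1 hy.2)
        by_contra hn
        simp only [mem_union, mem_inter_iff, mem_preimage, hy, true_and, not_or] at hn
        exact hn.2 (h6 hn.1.1.1 hn.1.1.2 hn.1.2)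
      · right; exact h5
    have hle := (measure_mono hsub).trans ((measure_union_le _ _).trans (add_le_add
      ((measure_union_le _ _).trans (add_le_add ((measure_union_le _ _).trans (add_le_add
      ((measure_union_le _ _).trans (add_le_add s1 s2)) s3)) s4)) (ae_iff.1 hx).le))
    rw [Real.volume_Ioo, add_zero, ← ENNReal.ofReal_add (by norm_num) (by norm_num),
      ← ENNReal.ofReal_add (by norm_num) (by norm_num),
      ← ENNReal.ofReal_add (by norm_num) (by norm_num),
      ENNReal.ofReal_le_ofReal_iff (by norm_num)] at hle
    linarith
  obtain ⟨a1, a2, a3⟩ := args x0 hy1.1 hy1.2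
  have b1 := hout _ (x0.trans hy1.1) hy1.2 hy3.1
  have b2 := hout _ a1.1 a1.2 hy3.2.1
  have b3 := hout _ a2.1 a2.2 hy3.2.2.1
  have b4 := hout _ a3.1 a3.2 hy3.2.2.2
  have hM := le_abs_self M
  unfold pent at hy2
  simp only at hy2
  rw [abs_le] at hy2 b1 b2 b3 b4 ⊢
  constructor <;> linarith [hy2.1, hy2.2, b1.1, b1.2, b2.1, b2.2, b3.1, b3.2, b4.1, b4.2]

lemma ae_reflect {L : ℝ → ℝ} (hL : ∀ t, 0 < t → t < 1 → L (1 - t) = - L t) {a s : ℝ} (ha : 0 < a)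
    (h : ∀ᵐ t : ℝ, a ≤ t → t ≤ 1 / 2 → |L t| ≤ s) :
    ∀ᵐ t : ℝ, a ≤ t → t ≤ 1 - a → |L t| ≤ s := by
  filter_upwards [h, (qmp_affine (-1) 1 (by norm_num)).ae h] with t h1 h2 h3 h4
  rcases le_total t (1 / 2) with h | h
  · exact h1 h3 h
  · have := h2 (by linarith) (by linarith)
    rw [show -1 * t + 1 = 1 - t by ring, hL t (by linarith) (by linarith), abs_neg] at this
    exact this

lemma bounded {L : ℝ → ℝ} {M : ℝ} (hM : 0 ≤ M) (hm : Measurable L)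
    (hL : ∀ t, 0 < t → t < 1 → L (1 - t) = - L t)
    (hp : ∀ᵐ p : ℝ × ℝ, 0 < p.1 → p.1 < p.2 → p.2 < 1 → |pent L p| ≤ M) :
    ∃ s : ℝ, 0 ≤ s ∧ ∀ᵐ t : ℝ, 0 < t → t < 1 → |L t| ≤ s := by
  obtain ⟨B, hB0, hB⟩ := local_bound hm (ε := 1 / 12) (by norm_num) (by norm_num) hp
  have hB' : ∀ᵐ t : ℝ, 1 / 12 ≤ t → t ≤ 11 / 12 → |L t| ≤ B := by
    have := ae_reflect hL (by norm_num) hB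
    norm_num at this ⊢
    exact this
  set s := 6 * B + 3 * M with hs
  have hBs : B ≤ s := by linarith
  refine ⟨s, by positivity, ?_⟩
  have key : ∀ n : ℕ, ∀ᵐ t : ℝ, (2 / 3 : ℝ) ^ n * (1 / 12) ≤ t → t ≤ 1 / 2 → |L t| ≤ s := by
    intro n
    induction n with
    | zero =>
      filter_upwards [hB] with t h h1 h2
      exact (h (by simpa using h1) h2).trans hBs
    | succ n ih =>
      refine chain_step (by positivity) hp hB' ?_ hBs le_rfl
      convert ih using 4
      rw [pow_succ]; ring
  have key2 : ∀ n : ℕ, ∀ᵐ t : ℝ, (2 / 3 : ℝ) ^ n * (1 / 12) ≤ t → t ≤ 1 - (2 / 3 : ℝ) ^ n * (1 / 12)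
      → |L t| ≤ s := fun n => ae_reflect hL (by positivity) (key n)
  filter_upwards [ae_all_iff.2 key2] with t h h0 h1
  obtain ⟨n, hn⟩ := exists_pow_lt_of_lt_one (show 0 < min t (1 - t) from lt_min h0 (by linarith))
    (show (2 / 3 : ℝ) < 1 by norm_num)
  have h3 := hn.trans_le (min_le_left _ _)
  have h4 := hn.trans_le (min_le_right _ _)
  have h5 : 0 < (2 / 3 : ℝ) ^ n := by positivity
  exact h n (by linarith) (by linarith)

lemma core2 {L : ℝ → ℝ} {M : ℝ} (hM : 0 ≤ M) (hm : Measurable L)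
    (hL : ∀ t, 0 < t → t < 1 → L (1 - t) = - L t)
    (hp : ∀ᵐ p : ℝ × ℝ, 0 < p.1 → p.1 < p.2 → p.2 < 1 → |pent L p| ≤ M) :
    ∀ᵐ t : ℝ, 0 < t → t < 1 → |L t| ≤ 9 * M := by
  obtain ⟨s, hs, hb⟩ := bounded hM hm hL hp
  set L' : ℝ → ℝ := fun t => if |L t| ≤ s then L t else 0 with hL'
  have heq : ∀ᵐ t : ℝ, 0 < t → t < 1 → L' t = L t := by
    filter_upwards [hb] with t h h0 h1
    simp [hL', h h0 h1]
  have := core (L := L') (S := s) hM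
    (Measurable.ite (measurableSet_le (by fun_prop) (by fun_prop)) hm measurable_const)
    (fun t h0 h1 => by simp only [hL', hL t h0 h1, abs_neg]; split_ifs <;> simp)
    (fun t => by
      simp only [hL']
      split_ifs with h
      · exact h
      · simpa using hs) (by
    filter_upwards [hp, ae_args heq] with p h1 h2 a b c
    obtain ⟨a1, a2, a3⟩ := args a b c
    obtain ⟨q1, q2, q3, q4, q5⟩ := h2 a b c
    have := h1 a b c
    unfold pent at this ⊢
    rw [q1 a (b.trans c), q2 (a.trans b) c, q3 a1.1 a1.2, q4 a2.1 a2.2, q5 a3.1 a3.2]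
    exact this)
  filter_upwards [this, heq] with t h1 h2 h3 h4
  rw [← h2 h3 h4]; exact h1 h3 h4

end SA

namespace SA

lemma P2_open : IsOpen P2 := by
  unfold P2
  exact (isOpen_lt continuous_const continuous_fst).inter
    ((isOpen_lt continuous_fst continuous_snd).inter (isOpen_lt continuous_snd continuous_const))

lemma P2_ae {Q : ℝ × ℝ → Prop} : (∀ᵐ p ∂(volume.restrict P2), Q p) ↔
    ∀ᵐ p : ℝ × ℝ, 0 < p.1 → p.1 < p.2 → p.2 < 1 → Q p := by
  rw [ae_restrict_iff' P2_open.measurableSet]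
  apply Filter.eventually_congr
  filter_upwards with p
  exact ⟨fun h a b c => h ⟨a, b, c⟩, fun h a => h a.1 a.2.1 a.2.2⟩

lemma I_ae {Q : ℝ → Prop} : (∀ᵐ p ∂(volume.restrict (Ioo (0:ℝ) 1)), Q p) ↔
    ∀ᵐ p : ℝ, 0 < p → p < 1 → Q p := by
  rw [ae_restrict_iff' measurableSet_Ioo]
  apply Filter.eventually_congr
  filter_upwards with p
  exact ⟨fun h a b => h ⟨a, b⟩, fun h a => h a.1 a.2⟩

lemma P2_exists {Q : ℝ × ℝ → Prop} (h : ∀ᵐ p ∂(volume.restrict P2), Q p) : ∃ p, Q p := by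
  have hne : P2.Nonempty := ⟨(1 / 3, 2 / 3), by simp [P2]; norm_num⟩
  have hpos := P2_open.measure_pos volume hne
  by_contra hc
  push Not at hc
  have : ∀ᵐ p ∂(volume.restrict P2), False := h.mono fun p hp => hc p hp
  rw [Filter.eventually_false_iff_eq_bot, ae_eq_bot, Measure.restrict_eq_zero] at this
  exact hpos.ne' this

lemma main {L : ℝ → ℝ} {C M : ℝ}
    (hm : AEMeasurable L (volume.restrict (Ioo (0:ℝ) 1)))
    (hp : ∀ᵐ p ∂(volume.restrict P2), |pent L p| ≤ M)
    (hC : ∀ᵐ x ∂(volume.restrict (Ioo (0:ℝ) 1)), L (1 - x) = C - L x) :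
    0 ≤ M ∧ ∀ᵐ x ∂(volume.restrict (Ioo (0:ℝ) 1)), |L x| ≤ 9 * (M + |C| / 4) + |C| := by
  have hM : 0 ≤ M := by
    obtain ⟨p, h⟩ := P2_exists hp
    exact (abs_nonneg _).trans h
  refine ⟨hM, ?_⟩
  obtain ⟨Lm, hLm, hae⟩ := hm
  have hae' : ∀ᵐ x : ℝ, 0 < x → x < 1 → L x = Lm x := I_ae.1 hae
  rw [I_ae] at hC ⊢
  rw [P2_ae] at hp
  have q := qmp_affine (-1) 1 (by norm_num)
  set Lo : ℝ → ℝ := fun x => (Lm x - Lm (1 - x)) / 2 - C * (1 / 2 - x) with hLo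
  have heq : ∀ᵐ x : ℝ, 0 < x → x < 1 → Lo x = L x - C * (1 - x) := by
    filter_upwards [hae', q.ae hae', hC] with x h1 h2 h3 h4 h5
    rw [show -1 * x + 1 = 1 - x by ring] at h2
    simp only [hLo]
    rw [← h1 h4 h5, ← h2 (by linarith) (by linarith), h3 h4 h5]
    ring
  have h := core2 (L := Lo) (M := M + |C| / 4) (by positivity) (by fun_prop)
    (fun t _ _ => by simp only [hLo]; ring_nf) (by
      filter_upwards [hp, ae_args heq] with p h1 h2 a b c
      obtain ⟨a1, a2, a3⟩ := args a b c
      obtain ⟨q1, q2, q3, q4, q5⟩ := h2 a b c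
      have h1 := h1 a b c
      unfold pent at h1 ⊢
      rw [q1 a (b.trans c), q2 (a.trans b) c, q3 a1.1 a1.2, q4 a2.1 a2.2, q5 a3.1 a3.2]
      obtain ⟨x, y⟩ := p
      simp only at a b c h1 ⊢
      have y0 : 0 < y := a.trans b
      set R := x * (y - x) * (1 - y) / (y * (1 - x)) with hR
      have R0 : 0 ≤ R := by
        rw [hR]
        exact div_nonneg (mul_nonneg (mul_nonneg a.le (by linarith)) (by linarith))
          (mul_nonneg y0.le (by linarith))
      have R1 : R ≤ 1 / 4 := by
        rw [hR, div_le_iff₀ (mul_pos y0 (by linarith))]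
        have e1 : x * (y - x) ≤ y * y / 4 := by nlinarith [sq_nonneg (2 * x - y)]
        have e2 : x * (y - x) * (1 - y) ≤ y * y / 4 * (1 - y) :=
          mul_le_mul_of_nonneg_right e1 (by linarith)
        have e3 : y * (1 - y) ≤ 1 * (1 - x) := mul_le_mul c.le (by linarith) (by linarith) (by norm_num)
        nlinarith
      have e : L x - C * (1 - x) - (L y - C * (1 - y)) - (L (x / y) - C * (1 - x / y)) -
          (L ((y - 1) / (x - 1)) - C * (1 - (y - 1) / (x - 1))) +
          (L (x * (y - 1) / (y * (x - 1))) - C * (1 - x * (y - 1) / (y * (x - 1)))) =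
          (L x - L y - L (x / y) - L ((y - 1) / (x - 1)) + L (x * (y - 1) / (y * (x - 1)))) - C * R := by
        have x1 : 1 - x ≠ 0 := by linarith
        have x2 : x - 1 ≠ 0 := by linarith
        have f1 : (y - 1) / (x - 1) = (1 - y) / (1 - x) := by
          rw [div_eq_div_iff x2 x1]; ring
        have f2 : x * (y - 1) / (y * (x - 1)) = x * (1 - y) / (y * (1 - x)) := by
          rw [div_eq_div_iff (mul_ne_zero y0.ne' x2) (mul_ne_zero y0.ne' x1)]; ring
        have : (1 - x) - (1 - y) - (1 - x / y) - (1 - (y - 1) / (x - 1)) +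
          (1 - x * (y - 1) / (y * (x - 1))) = R := by
          rw [f1, f2, hR]; field_simp; ring
        rw [← this]; ring
      rw [e]
      have hCR : |C * R| ≤ |C| / 4 := by
        rw [abs_mul, abs_of_nonneg R0]; nlinarith [abs_nonneg C]
      exact (abs_sub _ _).trans (by linarith))
  filter_upwards [h, heq] with x h1 h2 h3 h4
  have h1 := h1 h3 h4
  rw [h2 h3 h4] at h1
  have : |C * (1 - x)| ≤ |C| := by
    rw [abs_mul, abs_of_pos (show 0 < 1 - x by linarith)]; nlinarith [abs_nonneg C]
  calc |L x| = |(L x - C * (1 - x)) + C * (1 - x)| := by ring_nf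
    _ ≤ _ := (abs_add_le _ _).trans (by linarith)

lemma sqrt_bound : 9 ≤ 1 + 16 / Real.sqrt 3 ∧ 13 / 4 ≤ 1 + 8 / Real.sqrt 3 := by
  have h3 : √(3:ℝ) ≤ 2 := by
    rw [Real.sqrt_le_left (by norm_num)]; norm_num
  have h0 : 0 < √(3:ℝ) := by positivity
  have : 8 / 2 ≤ 8 / √(3:ℝ) := by gcongr
  have : 16 / 2 ≤ 16 / √(3:ℝ) := by gcongr
  constructor <;> linarith

end SA

/-- **Continuity** (continuous dependence on the data) for the perturbed Spence–Abel system: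
the essential supremum of `|L₁ - L₂|` over `(0,1)` is at most
`(1 + 16/√3)·(essential sup of |R₁ - R₂| over P₂) + (1 + 8/√3)·|C₁ - C₂|`
(stated via arbitrary essential bounds `M` for `|R₁ - R₂|`). -/
theorem perturbed_spence_abel_continuity (R₁ R₂ : ℝ × ℝ → ℝ)
    (hR₁ : AEMeasurable R₁ (volume.restrict P2)) (hR₂ : AEMeasurable R₂ (volume.restrict P2))
    (hR₁bdd : ∃ M : ℝ, ∀ᵐ p ∂(volume.restrict P2), |R₁ p| ≤ M)
    (hR₂bdd : ∃ M : ℝ, ∀ᵐ p ∂(volume.restrict P2), |R₂ p| ≤ M)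
    (h6₁ : SixTermAE R₁) (hsym₁ : SymmAE R₁) (h6₂ : SixTermAE R₂) (hsym₂ : SymmAE R₂)
    (C₁ C₂ : ℝ) (L₁ L₂ : ℝ → ℝ)
    (hL₁ : AEMeasurable L₁ (volume.restrict (Set.Ioo (0:ℝ) 1)))
    (hL₂ : AEMeasurable L₂ (volume.restrict (Set.Ioo (0:ℝ) 1)))
    (hsol₁ : SolvesAE R₁ C₁ L₁) (hsol₂ : SolvesAE R₂ C₂ L₂) :
    ∀ M : ℝ, (∀ᵐ p ∂(volume.restrict P2), |R₁ p - R₂ p| ≤ M) →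
      ∀ᵐ x ∂(volume.restrict (Set.Ioo (0:ℝ) 1)),
        |L₁ x - L₂ x| ≤ (1 + 16 / Real.sqrt 3) * M + (1 + 8 / Real.sqrt 3) * |C₁ - C₂| := by
  intro M hM
  have hp : ∀ᵐ p ∂(volume.restrict P2), |SA.pent (fun x => L₁ x - L₂ x) p| ≤ M := by
    filter_upwards [hM, hsol₁.1, hsol₂.1] with p h h1 h2
    rw [← h1, ← h2] at h
    refine le_trans (le_of_eq ?_) h
    unfold SA.pent
    congr 1; ring
  have hC : ∀ᵐ x ∂(volume.restrict (Set.Ioo (0:ℝ) 1)),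
      (fun x => L₁ x - L₂ x) (1 - x) = (C₁ - C₂) - (fun x => L₁ x - L₂ x) x := by
    filter_upwards [hsol₁.2, hsol₂.2] with x h1 h2
    simp only [h1, h2]; ring
  obtain ⟨hM0, h⟩ := SA.main (hL₁.sub hL₂) hp hC
  obtain ⟨s1, s2⟩ := SA.sqrt_bound
  filter_upwards [h] with x hx
  have e1 := mul_le_mul_of_nonneg_right s1 hM0
  have e2 := mul_le_mul_of_nonneg_right s2 (abs_nonneg (C₁ - C₂))
  refine le_trans hx ?_
  linarith
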